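/- arXiv:2311.11996 — 2 statements merged into one kernel-verified Lean document; each statement's English description precedes it below -/
import Mathlib

section
/- Let P be a polymatroid of rank r on [m] such that rk_P({i}) = r for some i ∈ [m]. Define integers a_k (for k ∈ ℤ_{≥0}^m with |k| ≤ r) by the expansion Σ_{k ∈ I(P)∩ℤ^m} t^{(k)} = Σ_k (−1)^{r−|k|} a_k t^{[k]} in ℚ[t_1,…,t_m]. Then the homogeneous polynomial H̃(t_1,…,t_m,t_0) = Σ_k a_k t^k t_0^{r−|k|} is denormalized Lorentzian; in particular all a_k are nonnegative. -/
open MvPolynomial Finset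

/-- The rank-function axioms of a polymatroid on a finite ground set. -/
def IsPolymatroid {α : Type*} [Fintype α] [DecidableEq α] (rk : Finset α → ℕ) : Prop :=
  rk ∅ = 0 ∧ (∀ I J : Finset α, I ⊆ J → rk I ≤ rk J) ∧
    ∀ I J : Finset α, rk (I ∩ J) + rk (I ∪ J) ≤ rk I + rk J

/-- The base polytope `B(P)` of a polymatroid. -/
def basePolytope {α : Type*} [Fintype α] (rk : Finset α → ℕ) : Set (α → ℝ) :=
  {x | (∀ i, 0 ≤ x i) ∧ (∑ i, x i) = (rk Finset.univ : ℝ) ∧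
      ∀ I : Finset α, (∑ i ∈ I, x i) ≤ (rk I : ℝ)}

/-- The independence polytope `I(P)` of a polymatroid. -/
def indepPolytope {α : Type*} [Fintype α] (rk : Finset α → ℕ) : Set (α → ℝ) :=
  {x | (∀ i, 0 ≤ x i) ∧ ∀ I : Finset α, (∑ i ∈ I, x i) ≤ (rk I : ℝ)}

/-- `binomLower p k` is `p^{(k)} = binom(p + k - 1, k) = p(p+1)⋯(p+k-1)/k!`. -/
noncomputable def binomLower {σ K : Type*} [Field K] (p : MvPolynomial σ K) (k : ℕ) :
    MvPolynomial σ K :=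
  (k.factorial : K)⁻¹ • ∏ j ∈ Finset.range k, (p + MvPolynomial.C (j : K))

/-- `binomUpper p k` is `p^{[k]} = binom(p + k, k) = (p+1)(p+2)⋯(p+k)/k!`. -/
noncomputable def binomUpper {σ K : Type*} [Field K] (p : MvPolynomial σ K) (k : ℕ) :
    MvPolynomial σ K :=
  (k.factorial : K)⁻¹ • ∏ j ∈ Finset.range k, (p + MvPolynomial.C ((j : K) + 1))

/-- The Hessian matrix of a polynomial: its `(i,j)` entry is the constant coefficient of
`∂ᵢ ∂ⱼ f` (for a quadratic form this is the usual symmetric Hessian matrix). -/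
noncomputable def hessian {n : ℕ} (q : MvPolynomial (Fin n) ℝ) : Matrix (Fin n) (Fin n) ℝ :=
  fun i j => (MvPolynomial.pderiv i (MvPolynomial.pderiv j q)).coeff 0

/-- A real symmetric matrix has at most one positive eigenvalue (with multiplicity). -/
def AtMostOnePosEigenvalue {n : ℕ} (A : Matrix (Fin n) (Fin n) ℝ) : Prop :=
  ∀ hA : A.IsHermitian, {i : Fin n | 0 < hA.eigenvalues i}.Subsingleton

/-- A homogeneous polynomial of degree `d` with nonnegative coefficients is Lorentzian if its
support is the set of lattice points of the base polytope of a polymatroid, and every sequence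
of `d - 2` partial derivatives yields a quadratic form whose (symmetric) Hessian matrix has at
most one positive eigenvalue. -/
def IsLorentzian {n : ℕ} (d : ℕ) (f : MvPolynomial (Fin n) ℝ) : Prop :=
  f.IsHomogeneous d ∧ (∀ e, 0 ≤ f.coeff e) ∧
    (∃ rkQ : Finset (Fin n) → ℕ, IsPolymatroid rkQ ∧
      ∀ κ : Fin n → ℕ,
        (0 < f.coeff (Finsupp.equivFunOnFinite.symm κ) ↔
          (fun i => (κ i : ℝ)) ∈ basePolytope rkQ)) ∧
    ∀ v : Fin (d - 2) → Fin n,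
      AtMostOnePosEigenvalue
        (hessian ((List.ofFn v).foldl (fun g i => MvPolynomial.pderiv i g) f))

/-- The normalization `N(f)`, replacing each monomial `c • t^κ` by `(c/κ!) • t^κ`. -/
noncomputable def normalizePoly {n : ℕ} (f : MvPolynomial (Fin n) ℝ) :
    MvPolynomial (Fin n) ℝ :=
  ∑ e ∈ f.support, MvPolynomial.monomial e (f.coeff e / ∏ i, ((e i).factorial : ℝ))

/-- A polynomial is denormalized Lorentzian if its normalization is Lorentzian. -/
def IsDenormalizedLorentzian {n : ℕ} (d : ℕ) (f : MvPolynomial (Fin n) ℝ) : Prop :=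
  IsLorentzian d (normalizePoly f)

namespace LorAux

variable {ι : Type*} [Fintype ι]

/-- The bilinear form of a matrix. -/
def Q (H : ι → ι → ℝ) (x y : ι → ℝ) : ℝ := ∑ i, ∑ j, x i * H i j * y j

/-- At most one positive eigenvalue: negative semidefinite on a hyperplane. -/
def Hyp (H : ι → ι → ℝ) : Prop :=
  ∃ l : ι → ℝ, ∀ z : ι → ℝ, ∑ i, l i * z i = 0 → Q H z z ≤ 0

theorem Q_symm {H : ι → ι → ℝ} (hs : ∀ i j, H i j = H j i) (x y : ι → ℝ) :
    Q H x y = Q H y x := by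
  unfold Q
  rw [Finset.sum_comm]
  refine Finset.sum_congr rfl fun i _ => Finset.sum_congr rfl fun j _ => ?_
  rw [hs j i]; ring

theorem Q_comb {H : ι → ι → ℝ} (hs : ∀ i j, H i j = H j i) (x y : ι → ℝ) (a b : ℝ) :
    Q H (fun i => a * x i - b * y i) (fun i => a * x i - b * y i)
      = a ^ 2 * Q H x x - 2 * a * b * Q H x y + b ^ 2 * Q H y y := by
  have h : Q H (fun i => a * x i - b * y i) (fun i => a * x i - b * y i)
      = a ^ 2 * Q H x x - a * b * Q H x y - a * b * Q H y x + b ^ 2 * Q H y y := by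
    unfold Q
    simp only [Finset.mul_sum, ← Finset.sum_sub_distrib, ← Finset.sum_add_distrib]
    refine Finset.sum_congr rfl fun i _ => Finset.sum_congr rfl fun j _ => ?_
    ring
  rw [h, Q_symm hs y x]; ring

theorem sum_comb (l x y : ι → ℝ) (c d : ℝ) :
    ∑ i, l i * (c * x i + d * y i) = c * ∑ i, l i * x i + d * ∑ i, l i * y i := by
  rw [Finset.mul_sum, Finset.mul_sum, ← Finset.sum_add_distrib]
  refine Finset.sum_congr rfl fun t _ => ?_
  ring

theorem Hyp.ineq {H : ι → ι → ℝ} (hs : ∀ i j, H i j = H j i) (h : Hyp H) (x y : ι → ℝ)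
    (hy : 0 < Q H y y) : Q H x x * Q H y y ≤ (Q H x y) ^ 2 := by
  obtain ⟨l, hl⟩ := h
  set a := ∑ i, l i * y i with ha
  set b := ∑ i, l i * x i with hb
  have ha0 : a ≠ 0 := fun h0 => absurd (hl y h0) (not_le.mpr hy)
  have h1 := hl (fun i => a * x i - b * y i) (by
    have h2 := sum_comb l x y a (-b)
    rw [← ha, ← hb] at h2
    simp only [neg_mul, ← sub_eq_add_neg] at h2
    rw [h2]; ring)
  rw [Q_comb hs] at h1
  have ha2 : 0 < a ^ 2 := by positivity
  have h2 := mul_le_mul_of_nonneg_right h1 hy.le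
  have h3 := sq_nonneg (a * Q H x y - b * Q H y y)
  refine le_of_mul_le_mul_left ?_ ha2
  nlinarith

theorem Hyp.of_ineq {H : ι → ι → ℝ}
    (h : ∀ x y, 0 < Q H y y → Q H x x * Q H y y ≤ (Q H x y) ^ 2) : Hyp H := by
  by_cases hy : ∃ y, 0 < Q H y y
  · obtain ⟨y, hy⟩ := hy
    refine ⟨fun i => ∑ j, H i j * y j, fun z hz => ?_⟩
    have h0 : Q H z y = 0 := by
      rw [← hz]; unfold Q
      refine Finset.sum_congr rfl fun i _ => ?_
      rw [Finset.sum_mul]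
      refine Finset.sum_congr rfl fun j _ => ?_
      ring
    have h1 := h z y hy
    rw [h0] at h1
    by_contra hc
    push Not at hc
    have := mul_pos hc hy
    nlinarith
  · push Not at hy
    exact ⟨0, fun z _ => hy z⟩

/-- spectral expansion -/
theorem Q_spectral [DecidableEq ι] (B : Matrix ι ι ℝ) (hB : B.IsHermitian) (y : ι → ℝ) :
    Q B y y = ∑ k, hB.eigenvalues k * (∑ i, hB.eigenvectorBasis k i * y i) ^ 2 := by
  have h := hB.eigenvectorBasis.sum_inner_mul_inner (WithLp.toLp 2 y) (WithLp.toLp 2 (B.mulVec y))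
  have e1 : inner ℝ (WithLp.toLp 2 y) (WithLp.toLp 2 (B.mulVec y)) = Q B y y := by
    simp only [Q, PiLp.inner_apply, Matrix.mulVec, dotProduct]
    refine Finset.sum_congr rfl fun i _ => ?_
    simp only [RCLike.inner_apply, conj_trivial, Finset.sum_mul]
    refine Finset.sum_congr rfl fun j _ => ?_
    ring
  rw [← e1, ← h]
  refine Finset.sum_congr rfl fun k _ => ?_
  have e2 : inner ℝ (WithLp.toLp 2 y) (hB.eigenvectorBasis k) = ∑ i, hB.eigenvectorBasis k i * y i := by
    simp [PiLp.inner_apply]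
  have e3 : inner ℝ (hB.eigenvectorBasis k) (WithLp.toLp 2 (B.mulVec y))
      = hB.eigenvalues k * ∑ i, hB.eigenvectorBasis k i * y i := by
    have hk := hB.mulVec_eigenvectorBasis k
    have : inner ℝ (hB.eigenvectorBasis k) (WithLp.toLp 2 (B.mulVec y))
        = (⇑(hB.eigenvectorBasis k)) ⬝ᵥ (B.mulVec y) := by
      simp [PiLp.inner_apply, dotProduct, mul_comm]
    rw [this, Matrix.dotProduct_mulVec, ← Matrix.mulVec_transpose]
    have ht : B.transpose = B := by
      have := hB.eq
      rwa [Matrix.conjTranspose_eq_transpose_of_trivial] at this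
    rw [ht, hk]
    simp [dotProduct, Finset.mul_sum, mul_assoc]
  rw [e2, e3]; ring

theorem AtMost_of_Hyp {n : ℕ} (A : Matrix (Fin n) (Fin n) ℝ) (h : Hyp A) (hA : A.IsHermitian) :
    {i : Fin n | 0 < hA.eigenvalues i}.Subsingleton := by
  intro i hi j hj
  by_contra hij
  have hs : ∀ i j, A i j = A j i := fun i j => by
    have := hA.apply i j
    simpa using this.symm
  have orth : ∀ k l, ∑ a, hA.eigenvectorBasis k a * hA.eigenvectorBasis l a = if k = l then 1 else 0 := by
    intro k l
    have := (orthonormal_iff_ite.mp hA.eigenvectorBasis.orthonormal) k l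
    rw [← this]
    simp [PiLp.inner_apply, mul_comm]
  obtain ⟨l, hl⟩ := h
  set v := hA.eigenvectorBasis with hv
  set a := ∑ t, l t * v i t with ha
  set b := ∑ t, l t * v j t with hb
  have key : ∀ c d : ℝ, Q A (fun t => c * v i t + d * v j t) (fun t => c * v i t + d * v j t)
      = hA.eigenvalues i * c ^ 2 + hA.eigenvalues j * d ^ 2 := by
    intro c d
    rw [Q_spectral A hA]
    have e : ∀ k, (∑ t, v k t * (c * v i t + d * v j t)) =
        c * (if k = i then 1 else 0) + d * (if k = j then 1 else 0) := by
      intro k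
      rw [← orth k i, ← orth k j, Finset.mul_sum, Finset.mul_sum, ← Finset.sum_add_distrib]
      refine Finset.sum_congr rfl fun t _ => ?_
      ring
    simp only [← hv, e]
    rw [Finset.sum_eq_add i j hij]
    · simp [hij, Ne.symm hij]
    · intro k _ hk
      simp [hk.1, hk.2]
    · simp
    · simp
  have hi' : 0 < hA.eigenvalues i := hi
  have hj' : 0 < hA.eigenvalues j := hj
  by_cases h0 : a = 0
  · have h1 := hl (fun t => 1 * v i t + 0 * v j t) (by simpa [ha] using h0)
    rw [key] at h1
    nlinarith
  · have h1 := hl (fun t => b * v i t + (-a) * v j t) (by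
      have h2 := sum_comb l (v i) (v j) b (-a)
      rw [← ha, ← hb] at h2
      rw [h2]; ring)
    rw [key] at h1
    have : 0 < a ^ 2 := by positivity
    nlinarith [mul_pos hj' this, mul_nonneg hi'.le (sq_nonneg b)]

end LorAux

namespace LorAux

variable {ι : Type*} [Fintype ι]

theorem trickle (H : ι → ι → ℝ) (w : ι → ℝ) (Hs : ι → ι → ι → ℝ)
    (hw : ∀ i, 0 < w i) (hsym : ∀ i j, H i j = H j i)
    (hssym : ∀ l i j, Hs l i j = Hs l j i)
    (hnn : ∀ l i j, 0 ≤ Hs l i j)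
    (h1 : ∀ i j, H i j = ∑ l, w l * Hs l i j)
    (h2 : ∀ i j, H i j = ∑ l, Hs i j l * w l)
    (hhyp : ∀ l, Hyp (Hs l))
    (hconn : ∀ i j, (∃ a, 0 < H i a) → (∃ b, 0 < H j b) →
      i = j ∨ 0 < H i j ∨ ∃ l, 0 < H i l ∧ 0 < H l j) :
    Hyp H := by
  classical
  have hH : ∀ i j, 0 ≤ H i j := fun i j => by
    rw [h1]; exact Finset.sum_nonneg fun l _ => mul_nonneg (hw l).le (hnn _ _ _)
  set R : ι → ℝ := fun i => ∑ j, H i j * w j with hR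
  have hRnn : ∀ i, 0 ≤ R i := fun i => Finset.sum_nonneg fun j _ => mul_nonneg (hH _ _) (hw j).le
  have hR0 : ∀ i, R i = 0 → ∀ j, H i j = 0 := by
    intro i hi j
    have := (Finset.sum_eq_zero_iff_of_nonneg (fun j _ => mul_nonneg (hH i j) (hw j).le)).mp hi j
      (Finset.mem_univ _)
    rcases mul_eq_zero.mp this with h | h
    · exact h
    · exact absurd h (hw j).ne'
  have hRpos : ∀ i, R i ≠ 0 → ∃ a, 0 < H i a := by
    intro i hi
    by_contra hc
    push Not at hc
    exact hi (Finset.sum_eq_zero fun j _ => by rw [le_antisymm (hc j) (hH i j), zero_mul])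
  set D : ι → ℝ := fun i => R i / w i with hD
  have hDnn : ∀ i, 0 ≤ D i := fun i => div_nonneg (hRnn i) (hw i).le
  have hD0 : ∀ i, D i = 0 ↔ R i = 0 := fun i => by
    simp [hD, (hw i).ne']
  set q : ι → ℝ := fun i => Real.sqrt (D i) with hq
  have hqq : ∀ i, q i * q i = D i := fun i => Real.mul_self_sqrt (hDnn i)
  have hq0 : ∀ i, q i = 0 ↔ R i = 0 := fun i => by
    rw [← hD0, hq]; exact Real.sqrt_eq_zero (hDnn i)
  set B : Matrix ι ι ℝ := fun i j => (q i)⁻¹ * H i j * (q j)⁻¹ with hBdef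
  have hB : B.IsHermitian := by
    ext i j
    rw [Matrix.conjTranspose_apply, star_trivial]
    simp only [hBdef]
    rw [hsym j i]; ring
  -- (i)
  have hQB : ∀ y, Q B y y = Q H (fun i => (q i)⁻¹ * y i) (fun i => (q i)⁻¹ * y i) := by
    intro y
    unfold Q
    refine Finset.sum_congr rfl fun i _ => Finset.sum_congr rfl fun j _ => ?_
    simp only [hBdef]; ring
  have hQH : ∀ z, Q H z z = Q B (fun i => q i * z i) (fun i => q i * z i) := by
    intro z
    unfold Q
    refine Finset.sum_congr rfl fun i _ => Finset.sum_congr rfl fun j _ => ?_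
    simp only [hBdef]
    by_cases hi : q i = 0
    · rw [hR0 i ((hq0 i).mp hi) j]; ring
    · by_cases hj : q j = 0
      · rw [hsym, hR0 j ((hq0 j).mp hj) i]; ring
      · field_simp
  -- (ii)
  have hQsum : ∀ x, Q H x x = ∑ l, w l * Q (Hs l) x x := by
    intro x
    unfold Q
    simp only [h1, Finset.mul_sum, Finset.sum_mul]
    rw [Finset.sum_comm]
    conv_rhs => rw [Finset.sum_comm]
    rw [Finset.sum_comm]
    refine Finset.sum_congr rfl fun i _ => ?_
    conv_rhs => rw [Finset.sum_comm]
    refine Finset.sum_congr rfl fun j _ => Finset.sum_congr rfl fun l _ => ?_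
    ring
  have hww : ∀ l x, Q (Hs l) x w = ∑ j, H l j * x j := by
    intro l x
    unfold Q
    refine Finset.sum_congr rfl fun i _ => ?_
    rw [h2 l i, Finset.sum_mul]
    refine Finset.sum_congr rfl fun j _ => ?_
    ring
  have hle2 : ∀ y, Q B y y ≤ ∑ i, (∑ j, B i j * y j) ^ 2 := by
    intro y
    rw [hQB, hQsum]
    refine Finset.sum_le_sum fun l _ => ?_
    set x : ι → ℝ := fun i => (q i)⁻¹ * y i with hx
    have hBx : ∑ j, B l j * y j = (q l)⁻¹ * ∑ j, H l j * x j := by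
      rw [Finset.mul_sum]
      refine Finset.sum_congr rfl fun j _ => ?_
      simp only [hBdef, hx]; ring
    by_cases hl : R l = 0
    · have hz : Q (Hs l) x x = 0 := by
        unfold Q
        refine Finset.sum_eq_zero fun i _ => Finset.sum_eq_zero fun j _ => ?_
        have h3 : Hs l i j = 0 := by
          have h4 := hR0 l hl i
          rw [h2] at h4
          have := (Finset.sum_eq_zero_iff_of_nonneg
            (fun j _ => mul_nonneg (hnn l i j) (hw j).le)).mp h4 j (Finset.mem_univ _)
          rcases mul_eq_zero.mp this with h | h
          · exact h
          · exact absurd h (hw j).ne'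
        rw [h3]; ring
      rw [hz, mul_zero]; positivity
    · have hlpos : 0 < R l := lt_of_le_of_ne (hRnn l) (Ne.symm hl)
      have h3 := (hhyp l).ineq (hssym l) x w (by rw [hww]; exact hlpos)
      rw [hww, hww] at h3
      rw [hBx, mul_pow]
      have h5 : ((q l)⁻¹) ^ 2 = w l / R l := by
        rw [inv_pow, pow_two, hqq]; simp [hD]
      rw [h5, div_mul_eq_mul_div, le_div_iff₀ hlpos, mul_assoc]
      exact mul_le_mul_of_nonneg_left h3 (hw l).le
  -- (iii)
  have hdef : ∀ x : ι → ℝ, ∑ i, D i * x i ^ 2 - Q H x x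
      = 1 / 2 * ∑ i, ∑ j, H i j * (w i * w j) * (x i / w i - x j / w j) ^ 2 := by
    intro x
    have e1 : ∑ i, D i * x i ^ 2 = ∑ i, ∑ j, H i j * w j / w i * x i ^ 2 := by
      refine Finset.sum_congr rfl fun i _ => ?_
      simp only [hD, hR, Finset.sum_div, Finset.sum_mul]
    have e2 : ∑ i, D i * x i ^ 2 = ∑ i, ∑ j, H i j * w i / w j * x j ^ 2 := by
      rw [e1, Finset.sum_comm]
      refine Finset.sum_congr rfl fun i _ => Finset.sum_congr rfl fun j _ => ?_
      rw [hsym]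
    have e3 : ∑ i, D i * x i ^ 2 = 1 / 2 * (∑ i, ∑ j, H i j * w j / w i * x i ^ 2 +
      ∑ i, ∑ j, H i j * w i / w j * x j ^ 2) := by
      rw [← e1, ← e2]; ring
    rw [e3]; unfold Q
    simp only [Finset.mul_sum, ← Finset.sum_sub_distrib, ← Finset.sum_add_distrib]
    refine Finset.sum_congr rfl fun i _ => Finset.sum_congr rfl fun j _ => ?_
    have := (hw i).ne'
    have := (hw j).ne'
    field_simp
    ring
  have hdnn : ∀ (x : ι → ℝ) i j, 0 ≤ H i j * (w i * w j) * (x i / w i - x j / w j) ^ 2 :=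
    fun x i j => mul_nonneg (mul_nonneg (hH i j) (mul_pos (hw i) (hw j)).le) (sq_nonneg _)
  have hDy : ∀ y : ι → ℝ, ∑ i, D i * ((q i)⁻¹ * y i) ^ 2 ≤ ∑ i, y i ^ 2 := by
    intro y
    refine Finset.sum_le_sum fun i _ => ?_
    by_cases hi : q i = 0
    · rw [hi]; simp; positivity
    · rw [← hqq]; apply le_of_eq; field_simp
  refine ⟨R, fun z hz => ?_⟩
  rw [hQH, Q_spectral B hB]
  refine Finset.sum_nonpos fun k _ => ?_
  set v : ι → ℝ := fun i => hB.eigenvectorBasis k i with hv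
  set μ := hB.eigenvalues k with hμ
  by_cases hpos : μ ≤ 0
  · exact mul_nonpos_of_nonpos_of_nonneg hpos (sq_nonneg _)
  push Not at hpos
  have hBv : ∀ i, ∑ j, B i j * v j = μ * v i := by
    intro i
    have := congrFun (hB.mulVec_eigenvectorBasis k) i
    simpa [Matrix.mulVec, dotProduct] using this
  have hvv : ∑ i, v i ^ 2 = 1 := by
    have := (orthonormal_iff_ite.mp hB.eigenvectorBasis.orthonormal) k k
    simp only [PiLp.inner_apply] at this
    simpa [hv, pow_two] using this
  have hQv : Q B v v = μ := by
    have : Q B v v = ∑ i, v i * ∑ j, B i j * v j := by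
      unfold Q
      refine Finset.sum_congr rfl fun i _ => ?_
      rw [Finset.mul_sum]
      refine Finset.sum_congr rfl fun j _ => ?_
      ring
    rw [this]
    simp only [hBv]
    calc ∑ i, v i * (μ * v i) = μ * ∑ i, v i ^ 2 := by
          rw [Finset.mul_sum]; exact Finset.sum_congr rfl fun i _ => by ring
      _ = μ := by rw [hvv, mul_one]
  have hA1 : μ ≤ μ ^ 2 := by
    have := hle2 v
    rw [hQv] at this
    simp only [hBv, mul_pow] at this
    rwa [← Finset.mul_sum, hvv, mul_one] at this
  set x : ι → ℝ := fun i => (q i)⁻¹ * v i with hx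
  have hge1 : 1 ≤ μ := by nlinarith
  have hQx : Q H x x = μ := by rw [← hQB, hQv]
  have hd := hdef x
  have hDx : ∑ i, D i * x i ^ 2 ≤ 1 := by rw [← hvv]; exact hDy v
  have hz0 : ∑ i, ∑ j, H i j * (w i * w j) * (x i / w i - x j / w j) ^ 2 = 0 := by
    apply le_antisymm
    · rw [hQx] at hd; nlinarith
    · exact Finset.sum_nonneg fun i _ => Finset.sum_nonneg fun j _ => hdnn x i j
  have hadj : ∀ i j, 0 < H i j → x i / w i = x j / w j := by
    intro i j hij
    have h3 := (Finset.sum_eq_zero_iff_of_nonneg (fun i _ => Finset.sum_nonneg fun j _ => hdnn x i j)).mp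
      hz0 i (Finset.mem_univ _)
    have h4 := (Finset.sum_eq_zero_iff_of_nonneg (fun j _ => hdnn x i j)).mp h3 j (Finset.mem_univ _)
    have h5 : 0 < H i j * (w i * w j) := mul_pos hij (mul_pos (hw i) (hw j))
    have h6 := (mul_eq_zero.mp h4).resolve_left h5.ne'
    exact sub_eq_zero.mp (pow_eq_zero_iff (two_ne_zero)|>.mp h6)
  have hc : ∃ c, ∀ i, R i ≠ 0 → x i = c * w i := by
    by_cases hne : ∃ i, R i ≠ 0
    · obtain ⟨a, haR⟩ := hne
      refine ⟨x a / w a, fun i hi => ?_⟩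
      have : x i / w i = x a / w a := by
        rcases hconn i a (hRpos i hi) (hRpos a haR) with h | h | ⟨l, h, h'⟩
        · rw [h]
        · exact hadj _ _ h
        · rw [hadj _ _ h, hadj _ _ h']
      rw [← this, div_mul_cancel₀ _ (hw i).ne']
    · push Not at hne
      exact ⟨0, fun i hi => absurd (hne i) hi⟩
  obtain ⟨c, hc⟩ := hc
  have hfin : ∑ i, v i * (q i * z i) = 0 := by
    have : ∑ i, v i * (q i * z i) = c * ∑ i, R i * z i := by
      rw [Finset.mul_sum]
      refine Finset.sum_congr rfl fun i _ => ?_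
      by_cases hi : R i = 0
      · rw [(hq0 i).mpr hi, hi]; ring
      · have hqi : q i ≠ 0 := fun h => hi ((hq0 i).mp h)
        have e1 : v i = q i * x i := by simp only [hx]; field_simp
        rw [e1, hc i hi]
        have e2 : D i * w i = R i := by simp only [hD]; rw [div_mul_cancel₀ _ (hw i).ne']
        rw [← e2, ← hqq]; ring
    rw [this, hz, mul_zero]
  simp only [hv] at hfin
  rw [hfin]; simp

end LorAux

namespace LorAux

variable {ι : Type*} [Fintype ι] [DecidableEq ι]

/-- unit vector -/
def ev (i : ι) : ι → ℕ := Pi.single i 1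

/-- M-convexity (exchange property). -/
def MConv (B : Set (ι → ℕ)) : Prop :=
  ∀ u ∈ B, ∀ v ∈ B, ∀ i, u i < v i → ∃ j, v j < u j ∧ ∃ u' ∈ B, u' + ev j = u + ev i

/-- contraction -/
def con (B : Set (ι → ℕ)) (l : ι) : Set (ι → ℕ) := {v | v + ev l ∈ B}

theorem con_comm (B : Set (ι → ℕ)) (i j : ι) : con (con B i) j = con (con B j) i := by
  ext v
  simp only [con, Set.mem_ofPred_eq, add_right_comm]

theorem MConv.trans {B : Set (ι → ℕ)} (h : MConv B) (c : ι → ℕ) : MConv {v | v + c ∈ B} := by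
  intro u hu v hv i hi
  obtain ⟨j, hj, u', hu', e⟩ := h _ hu _ hv i (by simpa using hi)
  have hj' : v j < u j := by simpa using hj
  have hle : c + ev j ≤ u + c + ev i + 0 := by
    intro t
    have := congrFun e t
    simp only [Pi.add_apply, ev, Pi.single_apply, Pi.zero_apply] at *
    split_ifs at * with h1 h2 <;> subst_vars <;> omega
  have hcu : c ≤ u' := by
    intro t
    have := congrFun e t
    simp only [Pi.add_apply, ev, Pi.single_apply] at *
    split_ifs at * with h1 h2 <;> subst_vars <;> omega
  refine ⟨j, hj', u' - c, ?_, ?_⟩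
  · show u' - c + c ∈ B
    rwa [tsub_add_cancel_of_le hcu]
  · funext t
    have h1 := congrFun e t
    have h2 := hcu t
    simp only [Pi.add_apply, Pi.sub_apply] at *
    omega

theorem MConv.con {B : Set (ι → ℕ)} (h : MConv B) (l : ι) : MConv (con B l) := h.trans (ev l)

open Classical in
/-- weighted sum over sequences -/
noncomputable def T (w : ι → ℝ) : ℕ → Set (ι → ℕ) → ℝ
  | 0, C => if (0 : ι → ℕ) ∈ C then 1 else 0
  | n + 1, C => ∑ l, w l * T w n (con C l)

theorem T_nonneg (w : ι → ℝ) (hw : ∀ i, 0 ≤ w i) (n : ℕ) : ∀ C, 0 ≤ T w n C := by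
  induction n with
  | zero => intro C; unfold T; split_ifs <;> norm_num
  | succ n ih => intro C; unfold T; exact Finset.sum_nonneg fun l _ => mul_nonneg (hw l) (ih _)

theorem sum_ev (u : ι → ℕ) (i : ι) : ∑ t, (u + ev i) t = ∑ t, u t + 1 := by
  simp [Finset.sum_add_distrib, ev]

theorem exists_sub {u : ι → ℕ} {i : ι} (h : 0 < u i) : ∃ u', u' + ev i = u := by
  refine ⟨u - ev i, tsub_add_cancel_of_le ?_⟩
  intro t
  simp only [ev, Pi.single_apply]
  split_ifs with h1
  · subst h1; exact h
  · exact Nat.zero_le _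

theorem T_pos (w : ι → ℝ) (hw : ∀ i, 0 < w i) (n : ℕ) : ∀ C : Set (ι → ℕ), ∀ u ∈ C, ∑ i, u i = n →
    0 < T w n C := by
  induction n with
  | zero =>
    intro C u hu hs
    have : u = 0 := by
      funext i
      simpa using (Finset.sum_eq_zero_iff.mp hs) i (Finset.mem_univ i)
    subst this
    simp [T, hu]
  | succ n ih =>
    intro C u hu hs
    obtain ⟨l, hl⟩ : ∃ l, 0 < u l := by
      by_contra hc
      push Not at hc
      have : ∑ i, u i = 0 := Finset.sum_eq_zero fun i _ => Nat.le_zero.mp (hc i)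
      omega
    obtain ⟨u', rfl⟩ := exists_sub hl
    rw [sum_ev] at hs
    unfold T
    refine Finset.sum_pos' (fun l _ => mul_nonneg (hw l).le (T_nonneg w (fun i => (hw i).le) _ _))
      ⟨l, Finset.mem_univ _, mul_pos (hw l) (ih (con C l) u' hu (by omega))⟩

theorem exists_of_T_ne (w : ι → ℝ) (n : ℕ) : ∀ C : Set (ι → ℕ), T w n C ≠ 0 → ∃ u, u ∈ C := by
  induction n with
  | zero =>
    intro C h
    unfold T at h
    by_contra hc
    push Not at hc
    simp [hc 0] at h
  | succ n ih =>
    intro C h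
    unfold T at h
    obtain ⟨l, _, hl⟩ := Finset.exists_ne_zero_of_sum_ne_zero h
    obtain ⟨u, hu⟩ := ih _ (right_ne_zero_of_mul hl)
    exact ⟨_, hu⟩

/-- Hessian of the generating function -/
noncomputable def F (w : ι → ℝ) (k : ℕ) (B : Set (ι → ℕ)) (i j : ι) : ℝ := T w k (con (con B i) j)

theorem per_psd (R : ι → ι → Prop) (hs : ∀ i j, R i j → R j i) (ht : ∀ i j k, R i j → R j k → R i k)
    [∀ i j, Decidable (R i j)] (z : ι → ℝ) :
    0 ≤ Q (fun i j => if R i j then (1 : ℝ) else 0) z z := by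
  set c : ι → ℝ := fun k => ∑ i, if R k i then (1 : ℝ) else 0 with hc
  have key : ∀ i j, (if R i j then (1 : ℝ) else 0) =
      ∑ k, (if R k i then (1 : ℝ) else 0) * (if R k j then (1 : ℝ) else 0) / c k := by
    intro i j
    by_cases hij : R i j
    · have e : ∀ k, (if R k i then (1 : ℝ) else 0) * (if R k j then (1 : ℝ) else 0) / c k =
          (if R i k then (1 : ℝ) else 0) / c i := by
        intro k
        by_cases hk : R i k
        · have h1 := hs _ _ hk
          have h2 := ht _ _ _ h1 hij
          have h3 : c k = c i := by
            refine Finset.sum_congr rfl fun t _ => ?_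
            have : R k t ↔ R i t := ⟨fun h => ht _ _ _ hk h, fun h => ht _ _ _ h1 h⟩
            simp only [this]
          simp [h1, h2, hk, h3]
        · have h1 : ¬ R k i := fun h => hk (hs _ _ h)
          simp [h1, hk]
      simp only [e]
      rw [← Finset.sum_div, if_pos hij]
      have : c i ≠ 0 := by
        have : 0 < c i := Finset.sum_pos' (fun t _ => by split_ifs <;> norm_num)
          ⟨j, Finset.mem_univ _, by simp [hij]⟩
        exact this.ne'
      exact (div_self this).symm
    · rw [if_neg hij]
      symm
      refine Finset.sum_eq_zero fun k _ => ?_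
      by_cases h1 : R k i
      · have h2 : ¬ R k j := fun h => hij (ht _ _ _ (hs _ _ h1) h)
        simp [h2]
      · simp [h1]
  have : Q (fun i j => if R i j then (1 : ℝ) else 0) z z
      = ∑ k, (∑ i, z i * (if R k i then (1 : ℝ) else 0)) ^ 2 / c k := by
    unfold Q
    have e1 : ∀ i j, z i * (if R i j then (1 : ℝ) else 0) * z j = ∑ k,
        (z i * (if R k i then (1 : ℝ) else 0)) * (z j * (if R k j then (1 : ℝ) else 0)) / c k := by
      intro i j
      rw [key i j, Finset.mul_sum, Finset.sum_mul]
      exact Finset.sum_congr rfl fun k _ => by ring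
    calc ∑ i, ∑ j, z i * (if R i j then (1 : ℝ) else 0) * z j
        = ∑ i, ∑ j, ∑ k, (z i * (if R k i then (1 : ℝ) else 0)) *
            (z j * (if R k j then (1 : ℝ) else 0)) / c k :=
          Finset.sum_congr rfl fun i _ => Finset.sum_congr rfl fun j _ => e1 i j
      _ = ∑ i, ∑ k, ∑ j, (z i * (if R k i then (1 : ℝ) else 0)) *
            (z j * (if R k j then (1 : ℝ) else 0)) / c k :=
          Finset.sum_congr rfl fun i _ => Finset.sum_comm
      _ = ∑ k, ∑ i, ∑ j, (z i * (if R k i then (1 : ℝ) else 0)) *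
            (z j * (if R k j then (1 : ℝ) else 0)) / c k := Finset.sum_comm
      _ = _ := by
          refine Finset.sum_congr rfl fun k _ => ?_
          rw [pow_two, Finset.sum_mul_sum, Finset.sum_div]
          exact Finset.sum_congr rfl fun i _ => by rw [Finset.sum_div]
  rw [this]
  refine Finset.sum_nonneg fun k _ => div_nonneg (sq_nonneg _) ?_
  exact Finset.sum_nonneg fun t _ => by split_ifs <;> norm_num

theorem hyp_base (w : ι → ℝ) (B : Set (ι → ℕ)) (hB : MConv B) (hd : ∀ u ∈ B, ∑ i, u i = 2) :
    Hyp (F w 0 B) := by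
  classical
  set N : ι → Prop := fun i => ∃ u ∈ B, 0 < u i with hN
  set R : ι → ι → Prop := fun i j => N i ∧ N j ∧ ev i + ev j ∉ B with hR
  have hF : ∀ i j, F w 0 B i j = if ev i + ev j ∈ B then 1 else 0 := by
    intro i j
    simp only [F, T, con, Set.mem_ofPred_eq, zero_add, add_comm (ev j) (ev i)]
  have hNl : ∀ i j, ev i + ev j ∈ B → N i := fun i j h => ⟨_, h, by simp [ev]⟩
  have hNr : ∀ i j, ev i + ev j ∈ B → N j := fun i j h => ⟨_, h, by simp [ev]⟩
  have hFR : ∀ i j, F w 0 B i j =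
      (if N i then 1 else 0) * (if N j then 1 else 0) - (if R i j then (1 : ℝ) else 0) := by
    intro i j
    rw [hF]
    by_cases h : ev i + ev j ∈ B
    · simp [h, hNl i j h, hNr i j h, hR]
    · by_cases h1 : N i <;> by_cases h2 : N j <;> simp [h, h1, h2, hR]
  have hs : ∀ i j, R i j → R j i := fun i j ⟨h1, h2, h3⟩ => ⟨h2, h1, by rwa [add_comm]⟩
  have ht : ∀ i j k, R i j → R j k → R i k := by
    intro i j k ⟨h1, h2, h3⟩ ⟨_, h4, h5⟩
    refine ⟨h1, h4, fun h => ?_⟩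
    obtain ⟨v, hv, hvj⟩ := h2
    by_cases hji : j = i
    · subst hji; exact h5 h
    by_cases hjk : j = k
    · subst hjk; exact h3 h
    obtain ⟨t, ht, u', hu', e⟩ := hB _ h _ hv j (by simpa [ev, hji, hjk] using hvj)
    have : t = i ∨ t = k := by
      by_contra hc
      push Not at hc
      simp [ev, hc.1, hc.2] at ht
    rcases this with rfl | rfl
    · have : u' = ev j + ev k := by
        apply add_right_cancel (b := ev t)
        rw [e]; abel
      exact h5 (this ▸ hu')
    · have : u' = ev i + ev j := by
        apply add_right_cancel (b := ev t)
        rw [e]; abel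
      exact h3 (this ▸ hu')
  refine ⟨fun i => if N i then 1 else 0, fun z hz => ?_⟩
  have h1 := per_psd R hs ht z
  have h2 : Q (F w 0 B) z z = (∑ i, (if N i then 1 else 0) * z i) ^ 2
      - Q (fun i j => if R i j then (1 : ℝ) else 0) z z := by
    unfold Q
    rw [pow_two, Finset.sum_mul_sum, ← Finset.sum_sub_distrib]
    refine Finset.sum_congr rfl fun i _ => ?_
    rw [← Finset.sum_sub_distrib]
    refine Finset.sum_congr rfl fun j _ => ?_
    rw [hFR]; ring
  rw [h2, hz]
  linarith

theorem hyp_F (w : ι → ℝ) (hw : ∀ i, 0 < w i) (k : ℕ) : ∀ (B : Set (ι → ℕ)), MConv B →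
    (∀ u ∈ B, ∑ i, u i = k + 2) → Hyp (F w k B) := by
  induction k with
  | zero => intro B hB hd; exact hyp_base w B hB hd
  | succ k ih =>
    intro B hB hd
    have hpos : ∀ i j u, u + ev j + ev i ∈ B → 0 < F w (k + 1) B i j := by
      intro i j u hu
      refine T_pos w hw _ _ u hu ?_
      have := hd _ hu
      rw [sum_ev, sum_ev] at this
      omega
    have hex : ∀ i j, 0 < F w (k + 1) B i j → ∃ u, u + ev j + ev i ∈ B := by
      intro i j h
      exact exists_of_T_ne w _ _ h.ne'
    refine trickle (F w (k + 1) B) w (fun l => F w k (con B l)) hw ?_ ?_ ?_ ?_ ?_ ?_ ?_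
    · intro i j; simp only [F, con_comm B i j]
    · intro l i j; simp only [F, con_comm (con B l) i j]
    · intro l i j; exact T_nonneg w (fun i => (hw i).le) _ _
    · intro i j
      simp only [F, T]
      refine Finset.sum_congr rfl fun l _ => ?_
      rw [con_comm (con B i) j l, con_comm B i l]
    · intro i j
      simp only [F, T]
      refine Finset.sum_congr rfl fun l _ => ?_
      ring
    · intro l
      refine ih _ (hB.con l) fun u hu => ?_
      have := hd _ hu
      rw [sum_ev] at this
      omega
    · rintro i j ⟨a, ha⟩ ⟨b, hb⟩
      obtain ⟨u, hu⟩ := hex _ _ ha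
      obtain ⟨v, hv⟩ := hex _ _ hb
      by_cases hij : i = j
      · exact Or.inl hij
      right
      have hub := hd _ hu
      rw [sum_ev, sum_ev] at hub
      by_cases huj : 0 < (u + ev a) j
      · obtain ⟨u1, hu1⟩ := exists_sub huj
        left
        exact hpos i j u1 (by rw [hu1]; exact hu)
      · obtain ⟨t, ht, u', hu', e⟩ := hB _ hu _ hv j (by
          simp only [Pi.add_apply, ev, Pi.single_apply] at huj ⊢
          simp only [if_neg (Ne.symm hij)]
          simp
          split_ifs at * <;> omega)
        by_cases hti : t = i
        · subst hti
          have e1 : u' = u + ev a + ev j := by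
            apply add_right_cancel (b := ev t)
            rw [e]; abel
          right
          refine ⟨a, hpos t a u hu, ?_⟩
          rw [e1] at hu'
          exact hpos a j u (by rwa [add_right_comm] at hu')
        · left
          have : 0 < (u + ev a) t := by
            simp only [Pi.add_apply, ev, Pi.single_apply, if_neg hti] at ht ⊢
            omega
          obtain ⟨u1, hu1⟩ := exists_sub this
          refine hpos i j u1 ?_
          have e1 : u' = u1 + ev j + ev i := by
            apply add_right_cancel (b := ev t)
            rw [e, ← hu1]; abel
          rwa [e1] at hu'

theorem T_cont (n : ℕ) : ∀ C : Set (ι → ℕ), Continuous fun w : ι → ℝ => T w n C := by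
  induction n with
  | zero => intro C; unfold T; exact continuous_const
  | succ n ih =>
    intro C
    unfold T
    exact continuous_finsetSum _ fun l _ => (continuous_apply l).mul (ih _)

theorem hyp_F_nonneg (w : ι → ℝ) (hw : ∀ i, 0 ≤ w i) (k : ℕ) (B : Set (ι → ℕ)) (hB : MConv B)
    (hd : ∀ u ∈ B, ∑ i, u i = k + 2) : Hyp (F w k B) := by
  have hsym : ∀ w' : ι → ℝ, ∀ i j, F w' k B i j = F w' k B j i := fun w' i j => by
    simp only [F, con_comm B i j]
  apply Hyp.of_ineq
  intro x y hy
  have hc : ∀ x y : ι → ℝ, Continuous fun w' : ι → ℝ => Q (F w' k B) x y := by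
    intro x y
    unfold Q
    refine continuous_finsetSum _ fun i _ => continuous_finsetSum _ fun j _ => ?_
    exact (continuous_const.mul (T_cont _ _)).mul continuous_const
  have hp : Continuous fun ε : ℝ => (fun i => w i + ε : ι → ℝ) := by fun_prop
  have h0 : (fun i => w i + 0 : ι → ℝ) = w := by simp
  have ht : ∀ x y : ι → ℝ, Filter.Tendsto (fun ε : ℝ => Q (F (fun i => w i + ε) k B) x y)
      (nhdsWithin 0 (Set.Ioi 0)) (nhds (Q (F w k B) x y)) := by
    intro x y
    have := ((hc x y).comp hp).tendsto 0
    simp only [Function.comp_def, h0] at this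
    exact this.mono_left nhdsWithin_le_nhds
  refine le_of_tendsto_of_tendsto ((ht x x).mul (ht y y)) ((ht x y).pow 2) ?_
  filter_upwards [(ht y y).eventually (lt_mem_nhds hy), self_mem_nhdsWithin] with ε h1 h2
  exact (hyp_F _ (fun i => by have := hw i; have : 0 < ε := h2; linarith [hw i]) k B hB hd).ineq
    (hsym _) x y h1

end LorAux

namespace LorAux

variable {ι : Type*} [Fintype ι] [DecidableEq ι]

theorem exists_min {α : Type*} (S : Set α) (hS : S.Nonempty) (f : α → ℕ) :
    ∃ u ∈ S, ∀ v ∈ S, f u ≤ f v := by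
  obtain ⟨u, hu, h⟩ := WellFounded.has_min (InvImage.wf f Nat.lt_wfRel.wf) S hS
  exact ⟨u, hu, fun v hv => not_lt.mp (h v hv)⟩

theorem exch_at {u u' : ι → ℕ} {i j : ι} (e : u' + ev j = u + ev i) (t : ι) :
    u' t + (if t = j then 1 else 0) = u t + (if t = i then 1 else 0) := by
  have := congrFun e t
  simpa [ev, Pi.single_apply] using this

theorem deficit_lt {u u' v : ι → ℕ} {i j : ι} (e : u' + ev j = u + ev i) (hi : u i < v i)
    (hj : v j < u j) : ∑ t, (v t - u' t) < ∑ t, (v t - u t) := by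
  have hij : i ≠ j := by rintro rfl; omega
  refine Finset.sum_lt_sum (fun t _ => ?_) ⟨i, Finset.mem_univ _, ?_⟩
  · have := exch_at e t
    split_ifs at this <;> subst_vars <;> omega
  · have := exch_at e i
    simp [hij] at this
    omega

theorem exch_sum {u u' : ι → ℕ} {i j : ι} (e : u' + ev j = u + ev i) (I : Finset ι) :
    ∑ t ∈ I, u' t + (if j ∈ I then 1 else 0) = ∑ t ∈ I, u t + (if i ∈ I then 1 else 0) := by
  have := Finset.sum_congr (rfl : I = I) (fun t _ => exch_at e t)
  simpa [Finset.sum_add_distrib] using this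

/-- rank function of a set of vectors -/
noncomputable def rkB (B : Set (ι → ℕ)) (I : Finset ι) : ℕ :=
  sSup ((fun u : ι → ℕ => ∑ i ∈ I, u i) '' B)

theorem le_rkB {B : Set (ι → ℕ)} {d : ℕ} (hd : ∀ u ∈ B, ∑ i, u i = d) {u : ι → ℕ} (hu : u ∈ B)
    (I : Finset ι) : ∑ i ∈ I, u i ≤ rkB B I := by
  refine le_csSup ⟨d, ?_⟩ ⟨u, hu, rfl⟩
  rintro _ ⟨v, hv, rfl⟩
  rw [← hd v hv]
  exact Finset.sum_le_sum_of_subset (Finset.subset_univ _)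

theorem exists_rkB {B : Set (ι → ℕ)} {d : ℕ} (hd : ∀ u ∈ B, ∑ i, u i = d) (hne : B.Nonempty)
    (I : Finset ι) : ∃ u ∈ B, ∑ i ∈ I, u i = rkB B I := by
  have := Nat.sSup_mem (s := (fun u : ι → ℕ => ∑ i ∈ I, u i) '' B) (hne.image _) ⟨d, by
    rintro _ ⟨v, hv, rfl⟩
    rw [← hd v hv]
    exact Finset.sum_le_sum_of_subset (Finset.subset_univ _)⟩
  exact this

theorem nested {B : Set (ι → ℕ)} (hB : MConv B) {d : ℕ} (hd : ∀ u ∈ B, ∑ i, u i = d)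
    (hne : B.Nonempty) {I J : Finset ι} (hIJ : I ⊆ J) :
    ∃ u ∈ B, ∑ i ∈ I, u i = rkB B I ∧ ∑ i ∈ J, u i = rkB B J := by
  obtain ⟨v, hv, hvI⟩ := exists_rkB hd hne I
  obtain ⟨u, ⟨hu, huJ⟩, hmin⟩ := exists_min {u | u ∈ B ∧ ∑ i ∈ J, u i = rkB B J}
    (by obtain ⟨u, h1, h2⟩ := exists_rkB hd hne J; exact ⟨u, h1, h2⟩) (fun u => ∑ t, (v t - u t))
  refine ⟨u, hu, ?_, huJ⟩
  refine le_antisymm (le_rkB hd hu I) ?_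
  by_contra hc
  push Not at hc
  rw [← hvI] at hc
  obtain ⟨i, hi, hlt⟩ := Finset.exists_lt_of_sum_lt hc
  obtain ⟨j, hj, u', hu', e⟩ := hB u hu v hv i hlt
  have h1 := exch_sum e J
  rw [if_pos (hIJ hi)] at h1
  have h2 := le_rkB hd hu' J
  have h3 := hmin u' ⟨hu', by split_ifs at h1 <;> omega⟩
  have := deficit_lt e hlt hj
  omega

theorem lattice_aux (x : ι → ℕ) (d : ℕ) (hx : ∑ i, x i = d) (n : ℕ) : ∀ (B : Set (ι → ℕ)), B.Finite →
    B.ncard ≤ n → MConv B → (∀ u ∈ B, ∑ i, u i = d) →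
    (∀ I : Finset ι, ∃ u ∈ B, ∑ i ∈ I, x i ≤ ∑ i ∈ I, u i) → x ∈ B := by
  induction n with
  | zero =>
    intro B hfin hn _ _ hI
    obtain ⟨u, hu, _⟩ := hI ∅
    have : B = ∅ := by
      rw [← Set.ncard_eq_zero hfin]; omega
    rw [this] at hu
    exact absurd hu (Set.notMem_empty _)
  | succ n ih =>
    intro B hfin hn hB hd hI
    by_cases hall : ∀ u ∈ B, ∀ c, u c ≤ x c
    · obtain ⟨u, hu, _⟩ := hI ∅
      have : u = x := by
        have h1 := (Finset.sum_eq_sum_iff_of_le (fun c (_ : c ∈ Finset.univ) => hall u hu c)).mp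
          ((hd u hu).trans hx.symm)
        funext c; exact h1 c (Finset.mem_univ _)
      rwa [this] at hu
    push Not at hall
    obtain ⟨u0, hu0, c, hc⟩ := hall
    have hne : B.Nonempty := ⟨u0, hu0⟩
    have hxr : ∀ I, ∑ i ∈ I, x i ≤ rkB B I := fun I => by
      obtain ⟨u, hu, h⟩ := hI I
      exact h.trans (le_rkB hd hu I)
    obtain ⟨u1, hu1, hu1c⟩ := exists_rkB hd hne {c}
    set t := rkB B {c} with ht
    have htop : ∀ u ∈ B, u c ≤ t := fun u hu => by simpa using le_rkB hd hu {c}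
    have hxt : x c < t := lt_of_lt_of_le hc (htop _ hu0)
    simp only [Finset.sum_singleton] at hu1c
    have hsplit : ∀ u : ι → ℕ, u c + ∑ i ∈ Finset.univ.erase c, u i = ∑ i, u i := fun u =>
      Finset.add_sum_erase _ _ (Finset.mem_univ c)
    have hlow : ∀ u ∈ B, ∑ i ∈ Finset.univ.erase c, u i = rkB B (Finset.univ.erase c) → u c ≤ x c := by
      intro u hu h
      have h1 := hxr (Finset.univ.erase c)
      have h2 := hsplit u
      have h3 := hsplit x
      have h4 := hd u hu
      omega
    have hsub : x ∈ {u | u ∈ B ∧ u c < t} := by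
      apply ih
      · exact hfin.subset fun u hu => hu.1
      · have : {u | u ∈ B ∧ u c < t}.ncard < B.ncard := by
          apply Set.ncard_lt_ncard _ hfin
          refine ⟨fun u hu => hu.1, fun h => ?_⟩
          have := (h hu1).2
          omega
        omega
      · rintro u ⟨hu, huc⟩ v ⟨hv, hvc⟩ i hi
        obtain ⟨j, hj, u', hu', e⟩ := hB u hu v hv i hi
        refine ⟨j, hj, u', ⟨hu', ?_⟩, e⟩
        have := exch_at e c
        split_ifs at this <;> subst_vars <;> omega
      · exact fun u hu => hd u hu.1
      · intro I
        by_cases hcI : c ∈ I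
        · obtain ⟨u, hu, h1, h2⟩ := nested hB hd hne (Finset.erase_subset c I)
          by_cases hut : u c < t
          · exact ⟨u, ⟨hu, hut⟩, by rw [h2]; exact hxr I⟩
          have huc : u c = t := le_antisymm (htop u hu) (not_lt.mp hut)
          have hsI : ∀ u : ι → ℕ, u c + ∑ i ∈ I.erase c, u i = ∑ i ∈ I, u i := fun u =>
            Finset.add_sum_erase _ _ hcI
          have hbig : ∑ i ∈ I, x i + 1 ≤ ∑ i ∈ I, u i := by
            have := hsI u
            have := hsI x
            have := hxr (I.erase c)
            omega
          have hne' : {u | u ∈ B ∧ u c < t}.Nonempty := by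
            obtain ⟨v, hv, h⟩ := exists_rkB hd hne (Finset.univ.erase c)
            exact ⟨v, hv, lt_of_le_of_lt (hlow v hv h) hxt⟩
          obtain ⟨v, ⟨hv, hvc⟩, hmin⟩ := exists_min _ hne' (fun v => ∑ s, (u s - v s))
          have key : ∀ i, v i < u i → ¬ (i = c → v c + 1 < t) := by
            intro i hi hic
            obtain ⟨j, hj, v', hv', e⟩ := hB v hv u hu i hi
            have h3 := hmin v' ⟨hv', by
              have := exch_at e c
              split_ifs at this <;> subst_vars <;> simp_all <;> omega⟩
            have := deficit_lt e hi hj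
            omega
          have k1 : ∀ i, i ≠ c → u i ≤ v i := fun i hi => by
            by_contra hcon
            exact key i (not_le.mp hcon) (fun h => absurd h hi)
          have k2 : t ≤ v c + 1 := by
            by_contra hcon
            exact key c (by omega) (fun _ => not_le.mp hcon)
          refine ⟨v, ⟨hv, hvc⟩, ?_⟩
          have k3 : ∑ i ∈ I.erase c, u i ≤ ∑ i ∈ I.erase c, v i :=
            Finset.sum_le_sum fun i hi => k1 i (Finset.ne_of_mem_erase hi)
          have := hsI u
          have := hsI v
          omega
        · obtain ⟨u, hu, h1, h2⟩ := nested hB hd hne (I := I) (J := Finset.univ.erase c) (by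
            intro i hi
            rw [Finset.mem_erase]
            exact ⟨fun h => hcI (h ▸ hi), Finset.mem_univ _⟩)
          exact ⟨u, ⟨hu, lt_of_le_of_lt (hlow u hu h2) hxt⟩, by rw [h1]; exact hxr I⟩
    exact hsub.1

theorem fin_of_deg {B : Set (ι → ℕ)} {d : ℕ} (hd : ∀ u ∈ B, ∑ i, u i = d) : B.Finite := by
  refine (Set.finite_Iic (fun _ : ι => d)).subset fun u hu i => ?_
  rw [← hd u hu]
  exact Finset.single_le_sum (f := u) (fun _ _ => Nat.zero_le _) (Finset.mem_univ i)

theorem poly_of_MConv {B : Set (ι → ℕ)} (hB : MConv B) {d : ℕ} (hd : ∀ u ∈ B, ∑ i, u i = d)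
    (hne : B.Nonempty) : ∃ rk : Finset ι → ℕ, IsPolymatroid rk ∧
      ∀ κ : ι → ℕ, κ ∈ B ↔ (fun i => (κ i : ℝ)) ∈ basePolytope rk := by
  have huniv : rkB B Finset.univ = d := by
    obtain ⟨u, hu, h⟩ := exists_rkB hd hne Finset.univ
    rw [← h, hd u hu]
  refine ⟨rkB B, ⟨?_, ?_, ?_⟩, ?_⟩
  · obtain ⟨u, hu, h⟩ := exists_rkB hd hne ∅
    rw [← h]; simp
  · intro I J hIJ
    obtain ⟨u, hu, h⟩ := exists_rkB hd hne I
    rw [← h]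
    exact (Finset.sum_le_sum_of_subset hIJ).trans (le_rkB hd hu J)
  · intro I J
    obtain ⟨u, hu, h1, h2⟩ := nested hB hd hne
      (Finset.inter_subset_left.trans Finset.subset_union_left : I ∩ J ⊆ I ∪ J)
    rw [← h1, ← h2, add_comm, Finset.sum_union_inter]
    exact add_le_add (le_rkB hd hu I) (le_rkB hd hu J)
  · intro κ
    constructor
    · intro h
      refine ⟨fun i => Nat.cast_nonneg _, ?_, fun I => ?_⟩
      · rw [huniv, ← hd κ h]; push_cast; rfl
      · have := le_rkB hd h I
        beta_reduce
        exact_mod_cast this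
    · rintro ⟨_, h2, h3⟩
      rw [huniv] at h2
      beta_reduce at h2
      refine lattice_aux κ d (by exact_mod_cast h2) _ B (fin_of_deg hd) le_rfl hB hd fun I => ?_
      obtain ⟨u, hu, h⟩ := exists_rkB hd hne I
      refine ⟨u, hu, ?_⟩
      rw [h]
      have := h3 I
      beta_reduce at this
      exact_mod_cast this

end LorAux

namespace LorAux

/-- lattice points of the base polytope -/
def Base {ι : Type*} [Fintype ι] (rk : Finset ι → ℕ) : Set (ι → ℕ) :=
  {u | ∑ i, u i = rk Finset.univ ∧ ∀ I : Finset ι, ∑ i ∈ I, u i ≤ rk I}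

theorem MConv_Base {ι : Type*} [Fintype ι] [DecidableEq ι] {rk : Finset ι → ℕ}
    (hP : IsPolymatroid rk) : MConv (Base rk) := by
  obtain ⟨_, _, hsub⟩ := hP
  rintro u ⟨hu1, hu2⟩ v ⟨hv1, hv2⟩ i hi
  obtain ⟨A, ⟨hiA, hAt⟩, hmin⟩ := exists_min {I : Finset ι | i ∈ I ∧ ∑ t ∈ I, u t = rk I}
    ⟨Finset.univ, Finset.mem_univ i, hu1⟩ Finset.card
  have hAsub : ∀ I : Finset ι, i ∈ I → ∑ t ∈ I, u t = rk I → A ⊆ I := by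
    intro I hiI hI
    have h1 := hsub A I
    have h2 := Finset.sum_union_inter (s₁ := A) (s₂ := I) (f := u)
    have h3 := hu2 (A ∩ I)
    have h4 := hu2 (A ∪ I)
    have h5 := hmin (A ∩ I) ⟨Finset.mem_inter.mpr ⟨hiA, hiI⟩, by omega⟩
    have h6 := Finset.eq_of_subset_of_card_le (Finset.inter_subset_left : A ∩ I ⊆ A) h5
    rw [← h6]
    exact Finset.inter_subset_right
  obtain ⟨j, hjA, hj⟩ : ∃ j ∈ A, v j < u j := by
    by_contra hc
    push Not at hc
    have := Finset.sum_lt_sum hc ⟨i, hiA, hi⟩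
    have := hv2 A
    omega
  refine ⟨j, hj, ?_⟩
  obtain ⟨u', e⟩ := exists_sub (u := u + ev i) (i := j) (by simp only [Pi.add_apply]; omega)
  refine ⟨u', ⟨?_, fun I => ?_⟩, e⟩
  · have := exch_sum e Finset.univ
    simp at this
    omega
  · have h1 := exch_sum e I
    have h2 := hu2 I
    by_cases hiI : i ∈ I
    · by_cases ht : ∑ t ∈ I, u t = rk I
      · have := hAsub I hiI ht hjA
        simp [hiI, this] at h1
        omega
      · simp [hiI] at h1
        omega
    · simp [hiI] at h1
      omega

variable {m : ℕ}

/-- the sum over copies -/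
def sg (p : Fin m ⊕ Fin m → ℕ) : Fin m → ℕ := fun i => p (Sum.inl i) + p (Sum.inr i)

/-- split polymatroid -/
def Big (rk : Finset (Fin m) → ℕ) (e : Fin m) : Set (Fin m ⊕ Fin m → ℕ) :=
  {p | sg p ∈ Base rk ∧ (∀ i, p (Sum.inr i) ≤ 1) ∧ p (Sum.inr e) = 0}

theorem sg_ev (p : Fin m ⊕ Fin m → ℕ) (a : Fin m ⊕ Fin m) :
    sg (p + ev a) = sg p + ev (Sum.elim id id a) := by
  funext t
  rcases a with i | i <;> simp [sg, ev, Pi.single_apply] <;> split_ifs <;> omega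

theorem Big_exch {rk : Finset (Fin m) → ℕ} {e : Fin m} {p q p' : Fin m ⊕ Fin m → ℕ}
    (hp : p ∈ Big rk e) (hq : q ∈ Big rk e) {a b : Fin m ⊕ Fin m} (ha : p a < q a)
    (h : p' + ev b = p + ev a) (hs : sg p' ∈ Base rk) : p' ∈ Big rk e := by
  have key : ∀ c, p' c ≤ p c ∨ p' c ≤ q c := by
    intro c
    have := exch_at h c
    split_ifs at this <;> subst_vars <;> omega
  refine ⟨hs, fun i => ?_, ?_⟩
  · have := hp.2.1 i
    have := hq.2.1 i
    rcases key (Sum.inr i) with h | h <;> omega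
  · have := hp.2.2
    have := hq.2.2
    rcases key (Sum.inr e) with h | h <;> omega

theorem MConv_Big {rk : Finset (Fin m) → ℕ} (hP : IsPolymatroid rk) (e : Fin m) :
    MConv (Big rk e) := by
  intro p hp q hq a ha
  obtain ⟨i, hi⟩ : ∃ i, i = Sum.elim id id a := ⟨_, rfl⟩
  have hB := MConv_Base hP
  by_cases hlt : sg p i < sg q i
  · obtain ⟨j, hj, u', hu', e1⟩ := hB _ hp.1 _ hq.1 i hlt
    obtain ⟨b, hb, hbj⟩ : ∃ b, q b < p b ∧ Sum.elim id id b = j := by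
      simp only [sg] at hj
      by_cases h : q (Sum.inl j) < p (Sum.inl j)
      · exact ⟨Sum.inl j, h, rfl⟩
      · exact ⟨Sum.inr j, by omega, rfl⟩
    obtain ⟨p', h⟩ := exists_sub (u := p + ev a) (i := b) (by simp only [Pi.add_apply]; omega)
    refine ⟨b, hb, p', Big_exch hp hq ha h ?_, h⟩
    have h2 := congrArg sg h
    rw [sg_ev, sg_ev, hbj, ← hi, ← e1] at h2
    rw [add_right_cancel h2]
    exact hu'
  · obtain ⟨b, hb, hbj⟩ : ∃ b, q b < p b ∧ Sum.elim id id b = i := by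
      rcases a with a | a
      · simp only [sg, Sum.elim_inl, id] at hi hlt
        subst hi
        exact ⟨Sum.inr i, by omega, rfl⟩
      · simp only [sg, Sum.elim_inr, id] at hi hlt
        subst hi
        exact ⟨Sum.inl i, by omega, rfl⟩
    obtain ⟨p', h⟩ := exists_sub (u := p + ev a) (i := b) (by simp only [Pi.add_apply]; omega)
    refine ⟨b, hb, p', Big_exch hp hq ha h ?_, h⟩
    have h2 := congrArg sg h
    rw [sg_ev, sg_ev, hbj, ← hi] at h2
    rw [add_right_cancel h2]
    exact hp.1

theorem Big_deg {rk : Finset (Fin m) → ℕ} {e : Fin m} {p : Fin m ⊕ Fin m → ℕ} (hp : p ∈ Big rk e) :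
    ∑ a, p a = rk Finset.univ := by
  rw [← hp.1.1, Fintype.sum_sum_type, ← Finset.sum_add_distrib]
  rfl

/-- merge the unit copies -/
def proj (p : Fin m ⊕ Fin m → ℕ) : Fin (m + 1) → ℕ :=
  Fin.cons (∑ i, p (Sum.inr i)) (fun i => p (Sum.inl i))

/-- index merging -/
def rho : Fin m ⊕ Fin m → Fin (m + 1) := Sum.elim Fin.succ (fun _ => 0)

theorem proj_ev (p : Fin m ⊕ Fin m → ℕ) (a : Fin m ⊕ Fin m) :
    proj (p + ev a) = proj p + ev (rho a) := by
  funext t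
  rcases a with i | i <;> refine Fin.cases ?_ (fun t => ?_) t <;>
    simp [proj, ev, rho, Pi.single_apply, Finset.sum_add_distrib, eq_comm]

theorem add0 {rk : Finset (Fin m) → ℕ} (hP : IsPolymatroid rk) (e : Fin m)
    (q : Fin m ⊕ Fin m → ℕ) (hq : q ∈ Big rk e) (n : ℕ) : ∀ p ∈ Big rk e,
    ∑ t, (q t - p t) ≤ n → ∑ i, p (Sum.inr i) < ∑ i, q (Sum.inr i) →
    ∃ j, q (Sum.inl j) < p (Sum.inl j) ∧ ∃ p' ∈ Big rk e,
      proj p' + ev j.succ = proj p + ev 0 := by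
  induction n with
  | zero =>
    intro p hp hn hlt
    obtain ⟨i, _, hi⟩ := Finset.exists_lt_of_sum_lt hlt
    have := Finset.single_le_sum (f := fun t => q t - p t) (fun _ _ => Nat.zero_le _)
      (Finset.mem_univ (Sum.inr i))
    omega
  | succ n ih =>
    intro p hp hn hlt
    obtain ⟨i, _, hi⟩ := Finset.exists_lt_of_sum_lt hlt
    obtain ⟨b, hb, p', hp', h⟩ := MConv_Big hP e p hp q hq _ hi
    have hd := deficit_lt h hi hb
    have hpr := congrArg proj h
    rw [proj_ev, proj_ev] at hpr
    rcases b with j | j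
    · exact ⟨j, hb, p', hp', hpr⟩
    · simp only [rho, Sum.elim_inr] at hpr
      have hpr' := add_right_cancel hpr
      have h0 : ∑ i, p' (Sum.inr i) = ∑ i, p (Sum.inr i) := by
        simpa [proj] using congrFun hpr' 0
      have h1 : ∀ j, p' (Sum.inl j) = p (Sum.inl j) := fun j => by
        simpa [proj] using congrFun hpr' j.succ
      obtain ⟨j, hj, p'', hp'', h''⟩ := ih p' hp' (by omega) (by omega)
      exact ⟨j, by rw [← h1]; exact hj, p'', hp'', by rw [h'', hpr']⟩

theorem MConv_proj {rk : Finset (Fin m) → ℕ} (hP : IsPolymatroid rk) (e : Fin m) :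
    MConv (proj '' Big rk e) := by
  rintro _ ⟨p, hp, rfl⟩ _ ⟨q, hq, rfl⟩ k hk
  revert hk
  refine Fin.cases ?_ (fun i => ?_) k
  · intro hk
    obtain ⟨j, hj, p', hp', h⟩ := add0 hP e q hq _ p hp le_rfl (by simpa [proj] using hk)
    exact ⟨j.succ, by simpa [proj] using hj, _, ⟨p', hp', rfl⟩, h⟩
  · intro hk
    have hk' : p (Sum.inl i) < q (Sum.inl i) := by simpa [proj] using hk
    obtain ⟨b, hb, p', hp', h⟩ := MConv_Big hP e p hp q hq _ hk'
    have hpr := congrArg proj h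
    rw [proj_ev, proj_ev] at hpr
    rcases b with j | j
    · exact ⟨j.succ, by simpa [proj] using hb, _, ⟨p', hp', rfl⟩, hpr⟩
    · simp only [rho, Sum.elim_inr, Sum.elim_inl] at hpr
      by_cases h0 : ∑ i, q (Sum.inr i) < ∑ i, p (Sum.inr i)
      · exact ⟨0, by simpa [proj] using h0, _, ⟨p', hp', rfl⟩, hpr⟩
      · have e0 : ∑ i, p' (Sum.inr i) + 1 = ∑ i, p (Sum.inr i) := by
          simpa [proj, ev] using congrFun hpr 0
        obtain ⟨j', hj', p'', hp'', h''⟩ := add0 hP e q hq _ p' hp' le_rfl (by omega)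
        have e1 := exch_at h (Sum.inl j')
        refine ⟨j'.succ, ?_, _, ⟨p'', hp'', rfl⟩, h''.trans hpr⟩
        simp at e1
        show q (Sum.inl j') < p (Sum.inl j')
        split_ifs at e1 <;> subst_vars <;> omega

/-- a point of the split polymatroid from a subset -/
def bp (k : Fin m → ℕ) (S : Finset (Fin m)) : Fin m ⊕ Fin m → ℕ :=
  Sum.elim k (fun i => if i ∈ S then 1 else 0)

open Classical in
/-- the counts -/
noncomputable def cntC (C : Set (Fin m ⊕ Fin m → ℕ)) (k : Fin m → ℕ) (s : ℕ) : ℕ :=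
  #{S : Finset (Fin m) | S.card = s ∧ bp k S ∈ C}

theorem bp_insert (k : Fin m → ℕ) (S : Finset (Fin m)) (j : Fin m) (hj : j ∉ S) :
    bp k (insert j S) = bp k S + ev (Sum.inr j) := by
  funext t
  rcases t with t | t
  · simp [bp, ev]
  · by_cases h : t = j
    · subst h; simp [bp, ev, hj]
    · simp [bp, ev, h]

/-- the weight -/
def w1 : Fin m ⊕ Fin m → ℝ := Sum.elim (fun _ => 0) (fun _ => 1)

theorem T_cnt (n : ℕ) : ∀ C : Set (Fin m ⊕ Fin m → ℕ), (∀ p ∈ C, ∀ i, p (Sum.inr i) ≤ 1) →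
    T w1 n C = n.factorial * cntC C 0 n := by
  classical
  induction n with
  | zero =>
    intro C _
    have e : bp (0 : Fin m → ℕ) ∅ = 0 := by funext t; rcases t with t | t <;> simp [bp]
    unfold T cntC
    by_cases h : (0 : Fin m ⊕ Fin m → ℕ) ∈ C
    · have : ({S : Finset (Fin m) | S.card = 0 ∧ bp 0 S ∈ C} : Finset _) = {∅} := by
        ext S
        simp only [Finset.mem_filter, Finset.mem_univ, true_and, Finset.card_eq_zero,
          Finset.mem_singleton]
        constructor
        · exact fun h => h.1
        · rintro rfl; exact ⟨rfl, e ▸ h⟩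
      rw [this]; simp [h]
    · have : ({S : Finset (Fin m) | S.card = 0 ∧ bp 0 S ∈ C} : Finset _) = ∅ := by
        ext S
        simp only [Finset.mem_filter, Finset.mem_univ, true_and, Finset.card_eq_zero,
          Finset.notMem_empty, iff_false]
        rintro ⟨rfl, h'⟩
        exact h (e ▸ h')
      rw [this]; simp [h]
  | succ n ih =>
    intro C hC
    unfold T
    rw [Fintype.sum_sum_type]
    simp only [w1, Sum.elim_inl, Sum.elim_inr, zero_mul, one_mul, Finset.sum_const_zero, zero_add]
    have h1 : ∀ j, T w1 n (con C (Sum.inr j)) = n.factorial * cntC (con C (Sum.inr j)) 0 n := by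
      intro j
      refine ih _ fun p hp i => ?_
      have := hC _ hp i
      simp only [Pi.add_apply] at this
      omega
    have h1' := h1
    simp only [w1] at h1'
    simp only [h1']
    rw [← Finset.mul_sum, Nat.factorial_succ]
    have h2 : ∀ j, cntC (con C (Sum.inr j)) 0 n =
        #{S ∈ ({S : Finset (Fin m) | S.card = n + 1 ∧ bp 0 S ∈ C} : Finset (Finset (Fin m))) | j ∈ S} := by
      intro j
      unfold cntC
      have hnot : ∀ S, bp 0 S ∈ con C (Sum.inr j) → j ∉ S := by
        intro S hS hj
        have := hC _ hS j
        simp [bp, ev, hj] at this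
      refine Finset.card_bij' (fun S _ => insert j S) (fun S _ => S.erase j) ?_ ?_ ?_ ?_
      · intro S hS
        simp only [Finset.mem_filter, Finset.mem_univ, true_and] at hS ⊢
        have hj := hnot S hS.2
        refine ⟨⟨by rw [Finset.card_insert_of_notMem hj, hS.1], ?_⟩, Finset.mem_insert_self _ _⟩
        rw [bp_insert _ _ _ hj]; exact hS.2
      · intro S hS
        simp only [Finset.mem_filter, Finset.mem_univ, true_and] at hS ⊢
        refine ⟨by rw [Finset.card_erase_of_mem hS.2, hS.1.1]; rfl, ?_⟩
        show bp 0 (S.erase j) + ev (Sum.inr j) ∈ C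
        rw [← bp_insert _ _ _ (Finset.notMem_erase j S), Finset.insert_erase hS.2]
        exact hS.1.2
      · intro S hS
        simp only [Finset.mem_filter, Finset.mem_univ, true_and] at hS
        exact Finset.erase_insert (hnot S hS.2)
      · intro S hS
        simp only [Finset.mem_filter, Finset.mem_univ, true_and] at hS
        exact Finset.insert_erase hS.2
    have h3 : ∑ j, cntC (con C (Sum.inr j)) 0 n = (n + 1) * cntC C 0 (n + 1) := by
      simp only [h2, Finset.card_filter _ (_ : Finset (Finset (Fin m)))]
      rw [Finset.sum_comm]
      have : ∀ S ∈ ({S : Finset (Fin m) | S.card = n + 1 ∧ bp 0 S ∈ C} : Finset (Finset (Fin m))),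
          (∑ j, if j ∈ S then 1 else 0) = n + 1 := by
        intro S hS
        simp only [Finset.mem_filter, Finset.mem_univ, true_and] at hS
        simp [hS.1]
      rw [Finset.sum_congr rfl this, Finset.sum_const, smul_eq_mul, mul_comm]
      rfl
    have h4 : (∑ j, (cntC (con C (Sum.inr j)) 0 n : ℝ)) = (n + 1) * cntC C 0 (n + 1) := by
      exact_mod_cast h3
    rw [h4]; push_cast; ring

end LorAux

namespace LorAux

variable {m : ℕ}

/-- translate in the first copy -/
def CC (B : Set (Fin m ⊕ Fin m → ℕ)) (k : Fin m → ℕ) : Set (Fin m ⊕ Fin m → ℕ) :=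
  {v | v + Sum.elim k 0 ∈ B}

theorem bp_add (k : Fin m → ℕ) (S : Finset (Fin m)) :
    bp 0 S + Sum.elim k 0 = bp k S := by
  funext t
  rcases t with t | t <;> simp [bp]

theorem CC_le {B : Set (Fin m ⊕ Fin m → ℕ)} (hB : ∀ p ∈ B, ∀ i, p (Sum.inr i) ≤ 1)
    (k : Fin m → ℕ) : ∀ p ∈ CC B k, ∀ i, p (Sum.inr i) ≤ 1 := by
  intro p hp i
  simpa using hB _ hp i

theorem T_CC {B : Set (Fin m ⊕ Fin m → ℕ)} (hB : ∀ p ∈ B, ∀ i, p (Sum.inr i) ≤ 1)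
    (k : Fin m → ℕ) (n : ℕ) : T w1 n (CC B k) = n.factorial * cntC B k n := by
  classical
  rw [T_cnt n _ (CC_le hB k)]
  congr 2
  unfold cntC CC
  congr 1
  ext S
  simp [bp_add]

theorem con_CC (B : Set (Fin m ⊕ Fin m → ℕ)) (k : Fin m → ℕ) (i : Fin m) :
    con (CC B k) (Sum.inl i) = CC B (k + ev i) := by
  ext v
  simp only [con, CC, Set.mem_ofPred_eq]
  have : v + ev (Sum.inl i) + Sum.elim k 0 = v + Sum.elim (k + ev i) 0 := by
    funext t
    rcases t with t | t
    · simp [ev, Pi.single_apply]; omega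
    · simp [ev]
  rw [this]

theorem T_succ (n : ℕ) (C : Set (Fin m ⊕ Fin m → ℕ)) :
    T w1 (n + 1) C = ∑ j, T w1 n (con C (Sum.inr j)) := by
  rw [T, Fintype.sum_sum_type]
  simp [w1]

/-- counts as function on all coordinates -/
noncomputable def cnt (B : Set (Fin m ⊕ Fin m → ℕ)) (κ : Fin (m + 1) → ℕ) : ℕ :=
  cntC B (fun i => κ i.succ) (κ 0)

theorem hyp_cnt {B : Set (Fin m ⊕ Fin m → ℕ)} (hM : MConv B)
    (hB : ∀ p ∈ B, ∀ i, p (Sum.inr i) ≤ 1) (α : Fin (m + 1) → ℕ)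
    (hd : ∀ p ∈ B, ∑ t, p t = ∑ t, α t + 2) :
    Hyp (fun i j => (cnt B (α + ev i + ev j) : ℝ)) := by
  obtain ⟨s, hs⟩ : ∃ s, s = α 0 := ⟨_, rfl⟩
  obtain ⟨k, hk⟩ : ∃ k : Fin m → ℕ, k = fun i => α i.succ := ⟨_, rfl⟩
  have hsum : ∑ t, α t = s + ∑ i, k i := by rw [Fin.sum_univ_succ, hs, hk]
  obtain ⟨l, hl⟩ := hyp_F_nonneg (w1 : Fin m ⊕ Fin m → ℝ)
    (by rintro (t | t) <;> simp [w1]) s (CC B k) (hM.trans _) (by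
      intro u hu
      have := hd _ hu
      simp only [Pi.add_apply, Finset.sum_add_distrib] at this
      rw [Fintype.sum_sum_type (Sum.elim k 0)] at this
      simp only [Sum.elim_inl, Sum.elim_inr, Pi.zero_apply, Finset.sum_const_zero] at this
      omega)
  have hs1 : (0 : ℝ) < s + 1 := by positivity
  refine ⟨Fin.cons ((∑ j, l (Sum.inr j)) / (s + 1)) (fun i => l (Sum.inl i)), ?_⟩
  intro x hx
  obtain ⟨y, hy⟩ : ∃ y, y = x 0 / ((s : ℝ) + 1) := ⟨_, rfl⟩
  have hy0 : x 0 = (s + 1) * y := by rw [hy]; field_simp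
  have h := hl (Sum.elim (fun i => x i.succ) (fun _ => y)) (by
    rw [Fin.sum_univ_succ] at hx
    simp only [Fin.cons_zero, Fin.cons_succ] at hx
    rw [Fintype.sum_sum_type]
    simp only [Sum.elim_inl, Sum.elim_inr, ← Finset.sum_mul]
    rw [hy]
    rw [← hx]; ring)
  have e1 : ∀ i j, F w1 s (CC B k) (Sum.inl i) (Sum.inl j) =
      s.factorial * cntC B (k + ev i + ev j) s := by
    intro i j
    unfold F
    rw [con_CC, con_CC, T_CC hB]
  have e2 : ∀ i, ∑ j, F w1 s (CC B k) (Sum.inl i) (Sum.inr j) =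
      s.factorial * ((s + 1) * cntC B (k + ev i) (s + 1)) := by
    intro i
    unfold F
    rw [con_CC, ← T_succ, T_CC hB, Nat.factorial_succ]
    push_cast; ring
  have e2' : ∀ i, ∑ j, F w1 s (CC B k) (Sum.inr j) (Sum.inl i) =
      s.factorial * ((s + 1) * cntC B (k + ev i) (s + 1)) := by
    intro i
    rw [← e2 i]
    unfold F
    simp only [con_comm _ _ (Sum.inl i)]
  have e3 : ∑ j, ∑ j', F w1 s (CC B k) (Sum.inr j) (Sum.inr j') =
      s.factorial * ((s + 1) * (s + 2) * cntC B k (s + 2)) := by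
    unfold F
    simp only [← T_succ]
    rw [T_CC hB, Nat.factorial_succ, Nat.factorial_succ]
    push_cast; ring
  have a1 : ∀ i j, cnt B (α + ev (Fin.succ i) + ev (Fin.succ j)) = cntC B (k + ev i + ev j) s := by
    intro i j
    unfold cnt
    congr 1
    · funext t; simp [hk, ev, Pi.single_apply]
    · simp [hs, ev, Pi.single_apply]
  have a2 : ∀ i, cnt B (α + ev 0 + ev (Fin.succ i)) = cntC B (k + ev i) (s + 1) := by
    intro i
    unfold cnt
    congr 1
    · funext t; simp [hk, ev, Pi.single_apply]
    · simp [hs, ev, Pi.single_apply]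
  have a2' : ∀ i, cnt B (α + ev (Fin.succ i) + ev 0) = cntC B (k + ev i) (s + 1) := by
    intro i
    rw [← a2, add_right_comm]
  have a3 : cnt B (α + ev 0 + ev 0) = cntC B k (s + 2) := by
    unfold cnt
    congr 1
    · funext t; simp [hk, ev, Pi.single_apply]
    · simp [hs, ev]
  have q1 : Q (fun i j => (cnt B (α + ev i + ev j) : ℝ)) x x =
      x 0 * cntC B k (s + 2) * x 0 + 2 * (∑ i : Fin m, x 0 * cntC B (k + ev i) (s + 1) * x i.succ)
      + ∑ i : Fin m, ∑ j : Fin m, x i.succ * cntC B (k + ev i + ev j) s * x j.succ := by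
    unfold Q
    simp only [Fin.sum_univ_succ, a1, a2, a2', a3, Finset.sum_add_distrib]
    have : ∑ i : Fin m, x i.succ * (cntC B (k + ev i) (s + 1) : ℝ) * x 0 =
      ∑ i : Fin m, x 0 * cntC B (k + ev i) (s + 1) * x i.succ :=
      Finset.sum_congr rfl fun i _ => by ring
    rw [this]; ring
  have q2 : Q (F w1 s (CC B k)) (Sum.elim (fun i => x i.succ) (fun _ => y))
      (Sum.elim (fun i => x i.succ) (fun _ => y)) =
      s.factorial * (y * ((s + 1) * (s + 2) * cntC B k (s + 2)) * y +
        2 * (∑ i : Fin m, ((s + 1) * y) * cntC B (k + ev i) (s + 1) * x i.succ)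
      + ∑ i : Fin m, ∑ j : Fin m, x i.succ * cntC B (k + ev i + ev j) s * x j.succ) := by
    unfold Q
    simp only [Fintype.sum_sum_type, Sum.elim_inl, Sum.elim_inr, Finset.sum_add_distrib, e1]
    have b1 : ∑ i : Fin m, ∑ j, x i.succ * F w1 s (CC B k) (Sum.inl i) (Sum.inr j) * y =
        s.factorial * ∑ i : Fin m, ((s + 1) * y) * cntC B (k + ev i) (s + 1) * x i.succ := by
      rw [Finset.mul_sum]
      refine Finset.sum_congr rfl fun i _ => ?_
      rw [← Finset.sum_mul, ← Finset.mul_sum, e2]; ring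
    have b2 : ∑ j, ∑ i : Fin m, y * F w1 s (CC B k) (Sum.inr j) (Sum.inl i) * x i.succ =
        s.factorial * ∑ i : Fin m, ((s + 1) * y) * cntC B (k + ev i) (s + 1) * x i.succ := by
      rw [Finset.mul_sum, Finset.sum_comm]
      refine Finset.sum_congr rfl fun i _ => ?_
      rw [← Finset.sum_mul, ← Finset.mul_sum, e2']; ring
    have b3 : ∑ j, ∑ j', y * F w1 s (CC B k) (Sum.inr j) (Sum.inr j') * y =
        s.factorial * (y * ((s + 1) * (s + 2) * cntC B k (s + 2)) * y) := by
      simp only [← Finset.sum_mul, ← Finset.mul_sum, e3]; ring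
    have b4 : ∑ i : Fin m, ∑ j : Fin m, x i.succ * (s.factorial * (cntC B (k + ev i + ev j) s : ℝ)) * x j.succ =
        s.factorial * ∑ i : Fin m, ∑ j : Fin m, x i.succ * cntC B (k + ev i + ev j) s * x j.succ := by
      simp only [Finset.mul_sum]
      refine Finset.sum_congr rfl fun i _ => Finset.sum_congr rfl fun j _ => by ring
    rw [b1, b2, b3, b4]; ring
  rw [q2] at h
  rw [q1, hy0]
  have hf : (0 : ℝ) < s.factorial := by exact_mod_cast s.factorial_pos
  have h' := nonpos_of_mul_nonpos_right h hf
  have hc : (0 : ℝ) ≤ (cntC B k (s + 2) : ℝ) := Nat.cast_nonneg _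
  have hd : 0 ≤ y ^ 2 * ((s : ℝ) + 1) * (cntC B k (s + 2) : ℝ) := by positivity
  nlinarith [h', hd]

theorem Big_le {rk : Finset (Fin m) → ℕ} {e : Fin m} : ∀ p ∈ Big rk e, ∀ i, p (Sum.inr i) ≤ 1 :=
  fun _ hp => hp.2.1

theorem proj_bp (k : Fin m → ℕ) (S : Finset (Fin m)) : proj (bp k S) = Fin.cons S.card k := by
  simp [proj, bp]

theorem cnt_pos {rk : Finset (Fin m) → ℕ} {e : Fin m} (κ : Fin (m + 1) → ℕ) :
    0 < cnt (Big rk e) κ ↔ κ ∈ proj '' Big rk e := by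
  classical
  unfold cnt cntC
  rw [Finset.card_pos]
  constructor
  · rintro ⟨S, hS⟩
    simp only [Finset.mem_filter, Finset.mem_univ, true_and] at hS
    refine ⟨_, hS.2, ?_⟩
    rw [proj_bp, hS.1]
    exact Fin.cons_self_tail κ
  · rintro ⟨p, hp, rfl⟩
    refine ⟨({i | p (Sum.inr i) = 1} : Finset (Fin m)), ?_⟩
    have : bp (fun i => p (Sum.inl i)) ({i | p (Sum.inr i) = 1} : Finset (Fin m)) = p := by
      funext t
      rcases t with t | t
      · rfl
      · have := hp.2.1 t
        simp only [bp, Sum.elim_inr, Finset.mem_filter, Finset.mem_univ, true_and]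
        split_ifs <;> omega
    have h2 := proj_bp (fun i => p (Sum.inl i)) ({i | p (Sum.inr i) = 1} : Finset (Fin m))
    rw [this] at h2
    simp only [Finset.mem_filter, Finset.mem_univ, true_and]
    refine ⟨?_, ?_⟩
    · rw [h2]; rfl
    · rw [h2]
      simp only [Fin.cons_succ]
      rw [this]; exact hp

theorem cnt_zero {rk : Finset (Fin m) → ℕ} {e : Fin m} (κ : Fin (m + 1) → ℕ)
    (h : ∑ i, κ i ≠ rk Finset.univ) : cnt (Big rk e) κ = 0 := by
  by_contra hc
  obtain ⟨p, hp, rfl⟩ := (cnt_pos κ).1 (Nat.pos_of_ne_zero hc)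
  apply h
  rw [← Big_deg hp, Fintype.sum_sum_type, Fin.sum_univ_succ, add_comm]
  rfl

theorem proj_nonempty {rk : Finset (Fin m) → ℕ} (hP : IsPolymatroid rk) (e : Fin m)
    (he : rk {e} = rk Finset.univ) : (proj '' Big rk e).Nonempty := by
  refine ⟨_, bp (Pi.single e (rk Finset.univ)) ∅, ⟨⟨?_, ?_⟩, ?_, ?_⟩, rfl⟩
  · simp [sg, bp]
  · intro I
    simp only [sg, bp]
    simp [Pi.single_apply]
    split_ifs with h
    swap
    · exact Nat.zero_le _
    rw [← he]
    exact hP.2.1 _ _ (by simpa using h)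
  · intro i; simp [bp]
  · simp [bp]

theorem poly_cnt {rk : Finset (Fin m) → ℕ} (hP : IsPolymatroid rk) (e : Fin m)
    (he : rk {e} = rk Finset.univ) : ∃ rkQ : Finset (Fin (m + 1)) → ℕ, IsPolymatroid rkQ ∧
      ∀ κ : Fin (m + 1) → ℕ, 0 < cnt (Big rk e) κ ↔ (fun i => (κ i : ℝ)) ∈ basePolytope rkQ := by
  obtain ⟨q, h1, h2⟩ := poly_of_MConv (MConv_proj hP e) (d := rk Finset.univ) (by
    intro u hu
    by_contra hc
    exact absurd ((cnt_pos u).2 hu) (by rw [cnt_zero u hc]; exact lt_irrefl _))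
    (proj_nonempty hP e he)
  exact ⟨q, h1, fun κ => (cnt_pos κ).trans (h2 κ)⟩

theorem hyp_Big {rk : Finset (Fin m) → ℕ} (hP : IsPolymatroid rk) (e : Fin m)
    (α : Fin (m + 1) → ℕ) : Hyp (fun i j => (cnt (Big rk e) (α + ev i + ev j) : ℝ)) := by
  by_cases h : ∑ t, α t + 2 = rk Finset.univ
  · exact hyp_cnt (MConv_Big hP e) Big_le α fun p hp => by rw [Big_deg hp, h]
  · have : ∀ i j, cnt (Big rk e) (α + ev i + ev j) = 0 := by
      intro i j
      apply cnt_zero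
      rw [sum_ev, sum_ev]
      exact h
    refine ⟨0, fun z _ => ?_⟩
    simp [Q, this]

end LorAux

namespace LorAux

variable {m : ℕ}

theorem prod_desc (p k : ℕ) : ∏ j ∈ Finset.range k, ((j : ℚ) - p) =
    (-1) ^ k * (k.factorial * p.choose k) := by
  have h : (p.descFactorial k : ℚ) = ∏ j ∈ Finset.range k, ((p : ℚ) - j) := by
    rw [← descPochhammer_eval_eq_descFactorial, descPochhammer_eval_eq_prod_range]
  have h2 : (p.descFactorial k : ℚ) = k.factorial * p.choose k := by
    exact_mod_cast Nat.descFactorial_eq_factorial_mul_choose p k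
  rw [← h2, h, ← Finset.card_range k, ← Finset.prod_const, Finset.card_range, ← Finset.prod_mul_distrib]
  exact Finset.prod_congr rfl fun j _ => by ring

theorem eval_upper (p : Fin m → ℕ) (i : Fin m) (k : ℕ) :
    MvPolynomial.eval (fun i => -(1 : ℚ) - p i) (binomUpper (MvPolynomial.X i) k) =
      (-1) ^ k * (p i).choose k := by
  unfold binomUpper
  rw [MvPolynomial.smul_eval, map_prod]
  have : ∀ j ∈ Finset.range k, MvPolynomial.eval (fun i => -(1 : ℚ) - p i)
      (MvPolynomial.X i + MvPolynomial.C ((j : ℚ) + 1)) = (j : ℚ) - p i := by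
    intro j _
    simp only [map_add, MvPolynomial.eval_X, MvPolynomial.eval_C]
    ring
  rw [Finset.prod_congr rfl this, prod_desc]
  have : (k.factorial : ℚ) ≠ 0 := by positivity
  field_simp

theorem eval_lower (p : Fin m → ℕ) (i : Fin m) (k : ℕ) :
    MvPolynomial.eval (fun i => -(1 : ℚ) - p i) (binomLower (MvPolynomial.X i) k) =
      (-1) ^ k * (p i + 1).choose k := by
  unfold binomLower
  rw [MvPolynomial.smul_eval, map_prod]
  have : ∀ j ∈ Finset.range k, MvPolynomial.eval (fun i => -(1 : ℚ) - p i)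
      (MvPolynomial.X i + MvPolynomial.C (j : ℚ)) = (j : ℚ) - (p i + 1 : ℕ) := by
    intro j _
    simp only [map_add, MvPolynomial.eval_X, MvPolynomial.eval_C]
    push_cast
    ring
  rw [Finset.prod_congr rfl this, prod_desc]
  have : (k.factorial : ℚ) ≠ 0 := by positivity
  field_simp

theorem finsum_to {α M : Type*} [AddCommMonoid M] {P : α → Prop} {s : Finset α}
    (h : ∀ x, P x ↔ x ∈ s) (f : α → M) : (∑ᶠ (x : α) (_ : P x), f x) = ∑ x ∈ s, f x := by
  simp only [h]
  exact finsum_mem_finset_eq_sum f s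

/-- lattice points of bounded degree -/
def DegF (m r : ℕ) : Finset (Fin m → ℕ) :=
  {κ ∈ Fintype.piFinset (fun _ => Finset.range (r + 1)) | ∑ i, κ i ≤ r}

theorem mem_DegF {r : ℕ} (κ : Fin m → ℕ) : κ ∈ DegF m r ↔ ∑ i, κ i ≤ r := by
  simp only [DegF, Finset.mem_filter, Fintype.mem_piFinset, Finset.mem_range, and_iff_right_iff_imp]
  intro h i
  have := Finset.single_le_sum (f := κ) (fun _ _ => Nat.zero_le _) (Finset.mem_univ i)
  omega

open Classical in
/-- independent lattice points -/
noncomputable def IndF (rk : Finset (Fin m) → ℕ) : Finset (Fin m → ℕ) :=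
  {κ ∈ DegF m (rk Finset.univ) | ∀ I : Finset (Fin m), ∑ i ∈ I, κ i ≤ rk I}

open Classical in
/-- bases -/
noncomputable def BaseF (rk : Finset (Fin m) → ℕ) : Finset (Fin m → ℕ) :=
  {κ ∈ DegF m (rk Finset.univ) | κ ∈ Base rk}

theorem mem_IndF {rk : Finset (Fin m) → ℕ} (κ : Fin m → ℕ) :
    κ ∈ IndF rk ↔ ∀ I : Finset (Fin m), ∑ i ∈ I, κ i ≤ rk I := by
  simp only [IndF, Finset.mem_filter, mem_DegF, and_iff_right_iff_imp]
  exact fun h => h _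

theorem mem_BaseF {rk : Finset (Fin m) → ℕ} (κ : Fin m → ℕ) : κ ∈ BaseF rk ↔ κ ∈ Base rk := by
  simp only [BaseF, Finset.mem_filter, mem_DegF, and_iff_right_iff_imp]
  exact fun h => h.1.le

theorem mem_indep {rk : Finset (Fin m) → ℕ} (κ : Fin m → ℕ) :
    (fun i => (κ i : ℝ)) ∈ indepPolytope rk ↔ κ ∈ IndF rk := by
  rw [mem_IndF]
  constructor
  · rintro ⟨_, h⟩ I
    have := h I
    beta_reduce at this
    exact_mod_cast this
  · intro h
    refine ⟨fun i => Nat.cast_nonneg _, fun I => ?_⟩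
    beta_reduce
    exact_mod_cast h I

theorem alt_sum (p n : ℕ) : ∑ j ∈ Finset.range (n + 1), (-1 : ℚ) ^ j * (p + 1).choose j =
    (-1) ^ n * p.choose n := by
  induction n with
  | zero => simp
  | succ n ih =>
    rw [Finset.sum_range_succ, ih, Nat.choose_succ_succ]
    push_cast; ring

theorem sum_upd (b : Fin m → ℕ) (e : Fin m) (j : ℕ) (I : Finset (Fin m)) :
    ∑ i ∈ I, Function.update b e j i + (if e ∈ I then b e else 0) =
      ∑ i ∈ I, b i + (if e ∈ I then j else 0) := by
  split_ifs with h
  · rw [Finset.sum_update_of_mem h, ← Finset.add_sum_erase _ _ h, Finset.sdiff_singleton_eq_erase]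
    ring
  · rw [Finset.sum_update_of_notMem h]

theorem ind_sum {rk : Finset (Fin m) → ℕ} (hP : IsPolymatroid rk) (e : Fin m)
    (he : rk {e} = rk Finset.univ) (g : (Fin m → ℕ) → ℚ) :
    ∑ u ∈ IndF rk, g u = ∑ b ∈ BaseF rk, ∑ j ∈ Finset.range (b e + 1), g (Function.update b e j) := by
  rw [Finset.sum_sigma']
  symm
  refine Finset.sum_bij' (fun x _ => Function.update x.1 e x.2)
    (fun u _ => ⟨Function.update u e (u e + (rk Finset.univ - ∑ i, u i)), u e⟩) ?_ ?_ ?_ ?_ ?_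
  · rintro ⟨b, j⟩ h
    simp only [Finset.mem_sigma, mem_BaseF, Finset.mem_range] at h
    rw [mem_IndF]
    intro I
    have := sum_upd b e j I
    have := h.1.2 I
    show ∑ i ∈ I, Function.update b e j i ≤ _
    split_ifs at * <;> omega
  · intro u h
    rw [mem_IndF] at h
    simp only [Finset.mem_sigma, mem_BaseF, Finset.mem_range, Function.update_self]
    refine ⟨?_, by omega⟩
    have h0 := h Finset.univ
    have h1 := sum_upd u e (u e + (rk Finset.univ - ∑ i, u i)) Finset.univ
    simp only [Finset.mem_univ, if_true] at h1
    refine ⟨by omega, fun I => ?_⟩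
    have h2 := sum_upd u e (u e + (rk Finset.univ - ∑ i, u i)) I
    by_cases hI : e ∈ I
    · have := hP.2.1 {e} I (by simpa using hI)
      have := Finset.sum_le_sum_of_subset (f := Function.update u e (u e + (rk Finset.univ - ∑ i, u i)))
        (Finset.subset_univ I)
      omega
    · have := h I
      simp only [hI, if_false] at h2
      omega
  · rintro ⟨b, j⟩ h
    simp only [Finset.mem_sigma, mem_BaseF, Finset.mem_range] at h
    have h1 := sum_upd b e j Finset.univ
    have h2 := h.1.1
    simp only [Finset.mem_univ, if_true] at h1
    have : j + (rk Finset.univ - ∑ i, Function.update b e j i) = b e := by omega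
    simp [this]
  · intro u h
    simp
  · rintro ⟨b, j⟩ h
    rfl

theorem ind_eval {rk : Finset (Fin m) → ℕ} (hP : IsPolymatroid rk) (e : Fin m)
    (he : rk {e} = rk Finset.univ) (p : Fin m → ℕ) :
    ∑ u ∈ IndF rk, ∏ i, ((-1 : ℚ) ^ (u i) * (p i + 1).choose (u i)) =
      (-1) ^ (rk Finset.univ) * ∑ b ∈ BaseF rk,
        ∏ i, ((if i = e then (p i).choose (b i) else (p i + 1).choose (b i) : ℕ) : ℚ) := by
  rw [ind_sum hP e he, Finset.mul_sum]
  refine Finset.sum_congr rfl fun b hb => ?_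
  rw [mem_BaseF] at hb
  have h1 : ∀ j, ∏ i, ((-1 : ℚ) ^ (Function.update b e j i) * (p i + 1).choose (Function.update b e j i)) =
      ((-1 : ℚ) ^ j * (p e + 1).choose j) *
        ∏ i ∈ Finset.univ.erase e, ((-1 : ℚ) ^ (b i) * (p i + 1).choose (b i)) := by
    intro j
    rw [← Finset.mul_prod_erase _ _ (Finset.mem_univ e), Function.update_self]
    congr 1
    refine Finset.prod_congr rfl fun i hi => ?_
    rw [Function.update_of_ne (Finset.ne_of_mem_erase hi)]
  simp only [h1]
  rw [← Finset.sum_mul, alt_sum, ← hb.1, ← Finset.prod_pow_eq_pow_sum, ← Finset.prod_mul_distrib]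
  rw [← Finset.mul_prod_erase Finset.univ _ (Finset.mem_univ e), if_pos rfl]
  congr 1
  refine Finset.prod_congr rfl fun i hi => ?_
  rw [if_neg (Finset.ne_of_mem_erase hi)]

theorem pascal (p : Fin m → ℕ) (b : Fin m → ℕ) (e : Fin m) :
    ∏ i, ((if i = e then (p i).choose (b i) else (p i + 1).choose (b i) : ℕ) : ℚ) =
    ∑ S : Finset (Fin m), if e ∉ S ∧ ∀ i ∈ S, 1 ≤ b i then
      ∏ i, ((p i).choose (b i - if i ∈ S then 1 else 0) : ℚ) else 0 := by
  have h1 : ∀ i, ((if i = e then (p i).choose (b i) else (p i + 1).choose (b i) : ℕ) : ℚ) =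
      (if i = e ∨ b i = 0 then 0 else ((p i).choose (b i - 1) : ℚ)) + (p i).choose (b i) := by
    intro i
    by_cases h : i = e
    · simp [h]
    · rcases hb : b i with _ | n
      · simp
      · simp [h, Nat.choose_succ_succ]
  simp only [h1]
  rw [Finset.prod_add, Finset.powerset_univ]
  refine Finset.sum_congr rfl fun S _ => ?_
  split_ifs with h
  · rw [← Finset.prod_mul_prod_compl S, Finset.compl_eq_univ_sdiff]
    congr 1
    · refine Finset.prod_congr rfl fun i hi => ?_
      have h2 := h.2 i hi
      rw [if_neg, if_pos hi]
      rintro (rfl | h3)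
      · exact h.1 hi
      · omega
    · refine Finset.prod_congr rfl fun i hi => ?_
      rw [if_neg (by simpa using hi)]; rfl
  · rw [not_and_or] at h
    obtain ⟨i, hi, h2⟩ : ∃ i ∈ S, i = e ∨ b i = 0 := by
      rcases h with h | h
      · exact ⟨e, by simpa using h, Or.inl rfl⟩
      · push Not at h
        obtain ⟨i, hi, h⟩ := h
        exact ⟨i, hi, Or.inr (by omega)⟩
    rw [Finset.prod_eq_zero hi (by rw [if_pos h2]), zero_mul]

theorem base_eval {rk : Finset (Fin m) → ℕ} (e : Fin m) (p : Fin m → ℕ) :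
    ∑ b ∈ BaseF rk, ∏ i, ((if i = e then (p i).choose (b i) else (p i + 1).choose (b i) : ℕ) : ℚ) =
    ∑ κ ∈ DegF m (rk Finset.univ), (cntC (Big rk e) κ (rk Finset.univ - ∑ i, κ i) : ℚ) *
      ∏ i, ((p i).choose (κ i) : ℚ) := by
  classical
  simp only [pascal, cntC, Finset.card_filter]
  push_cast
  simp only [Finset.sum_mul, ite_mul, one_mul, zero_mul]
  rw [Finset.sum_comm, Finset.sum_comm (s := DegF m (rk Finset.univ))]
  refine Finset.sum_congr rfl fun S _ => ?_
  rw [← Finset.sum_filter, ← Finset.sum_filter]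
  have hsg : ∀ κ : Fin m → ℕ, sg (bp κ S) = fun i => κ i + if i ∈ S then 1 else 0 := fun κ => rfl
  refine Finset.sum_bij' (fun b _ => fun i => b i - if i ∈ S then 1 else 0)
    (fun κ _ => fun i => κ i + if i ∈ S then 1 else 0) ?_ ?_ ?_ ?_ ?_
  · intro b hb
    simp only [Finset.mem_filter, mem_BaseF] at hb
    obtain ⟨hb, heS, h1⟩ := hb
    have h2 : sg (bp (fun i => b i - if i ∈ S then 1 else 0) S) = b := by
      rw [hsg]
      funext i
      have := h1 i
      split_ifs with h
      · have := this h; omega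
      · rfl
    have h3 : ∑ i, (b i - if i ∈ S then 1 else 0) + S.card = rk Finset.univ := by
      rw [← hb.1]
      conv_rhs => rw [← h2, hsg]
      simp [Finset.sum_add_distrib]
    simp only [Finset.mem_filter, mem_DegF]
    refine ⟨by omega, by omega, ?_, ?_, ?_⟩
    · rw [h2]; exact hb
    · intro i; simp only [bp, Sum.elim_inr]; split_ifs <;> omega
    · simp [bp, heS]
  · intro κ hκ
    simp only [Finset.mem_filter, mem_DegF] at hκ
    obtain ⟨_, _, h1, _, h2⟩ := hκ
    simp only [Finset.mem_filter, mem_BaseF]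
    refine ⟨h1, ?_, ?_⟩
    · intro h; simp [bp, h] at h2
    · intro i hi; simp [hi]
  · intro b hb
    simp only [Finset.mem_filter, mem_BaseF] at hb
    funext i
    have := hb.2.2 i
    dsimp only
    split_ifs with h
    · have := this h; omega
    · rfl
  · intro κ _
    funext i
    simp
  · intro b _
    rfl

theorem triang {r : ℕ} (c : (Fin m → ℕ) → ℚ)
    (h : ∀ p : Fin m → ℕ, ∑ κ ∈ DegF m r, c κ * ∏ i, ((p i).choose (κ i) : ℚ) = 0) (n : ℕ) :
    ∀ κ : Fin m → ℕ, ∑ i, κ i ≤ r → ∑ i, κ i = n → c κ = 0 := by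
  induction n using Nat.strong_induction_on with
  | _ n ih =>
    intro κ hr hn
    have := h κ
    rw [Finset.sum_eq_single κ] at this
    · simpa using this
    · intro k hk hne
      rw [mem_DegF] at hk
      by_cases hle : k ≤ κ
      · have hlt : ∑ i, k i < ∑ i, κ i := by
          obtain ⟨i, hi⟩ := Function.ne_iff.1 hne
          exact Finset.sum_lt_sum (fun i _ => hle i) ⟨i, Finset.mem_univ _, lt_of_le_of_ne (hle i) hi⟩
        rw [ih _ (by omega) k hk rfl, zero_mul]
      · simp only [Pi.le_def, not_forall, not_le] at hle
        obtain ⟨i, hi⟩ := hle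
        rw [Finset.prod_eq_zero (Finset.mem_univ i), mul_zero]
        rw [Nat.choose_eq_zero_of_lt hi]; rfl
    · intro hk
      exact absurd ((mem_DegF κ).2 hr) hk

theorem a_eq {r : ℕ} (rk : Finset (Fin m) → ℕ) (hP : IsPolymatroid rk)
    (hrank : rk Finset.univ = r) (e : Fin m) (he : rk {e} = r)
    (a : (Fin m → ℕ) → ℤ)
    (ha : (∑ᶠ (κ : Fin m → ℕ) (_ : (fun i => (κ i : ℝ)) ∈ indepPolytope rk),
            ∏ i, binomLower (MvPolynomial.X i) (κ i)) =
          ∑ᶠ (κ : Fin m → ℕ) (_ : ∑ i, κ i ≤ r),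
            MvPolynomial.C ((-1 : ℚ) ^ (r - ∑ i, κ i) * (a κ : ℚ)) *
              ∏ i, binomUpper (MvPolynomial.X i) (κ i))
    (κ : Fin m → ℕ) (hκ : ∑ i, κ i ≤ r) : a κ = cntC (Big rk e) κ (r - ∑ i, κ i) := by
  subst hrank
  rw [finsum_to mem_indep, finsum_to (fun κ => (mem_DegF κ).symm)] at ha
  have key : ∀ p : Fin m → ℕ, ∑ κ ∈ DegF m (rk Finset.univ),
      ((a κ : ℚ) - cntC (Big rk e) κ (rk Finset.univ - ∑ i, κ i)) *
        ∏ i, ((p i).choose (κ i) : ℚ) = 0 := by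
    intro p
    have h := congrArg (MvPolynomial.eval (fun i => -(1 : ℚ) - p i)) ha
    simp only [map_sum, map_mul, map_prod, eval_upper, eval_lower, MvPolynomial.eval_C] at h
    rw [ind_eval hP e he, base_eval] at h
    have h2 : ∀ κ ∈ DegF m (rk Finset.univ), (-1 : ℚ) ^ (rk Finset.univ - ∑ i, κ i) * (a κ : ℚ) *
        ∏ i, ((-1 : ℚ) ^ (κ i) * ((p i).choose (κ i) : ℚ)) =
        (-1) ^ (rk Finset.univ) * ((a κ : ℚ) * ∏ i, ((p i).choose (κ i) : ℚ)) := by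
      intro κ hκ
      rw [mem_DegF] at hκ
      rw [Finset.prod_mul_distrib, Finset.prod_pow_eq_pow_sum]
      conv_rhs => rw [← Nat.sub_add_cancel hκ, pow_add]
      ring
    rw [Finset.sum_congr rfl h2, ← Finset.mul_sum] at h
    have h3 := mul_left_cancel₀ (pow_ne_zero _ (by norm_num : (-1 : ℚ) ≠ 0)) h
    simp only [sub_mul, Finset.sum_sub_distrib]
    rw [h3, sub_self]
  have := triang _ key _ κ hκ rfl
  rw [sub_eq_zero] at this
  exact_mod_cast this

end LorAux

namespace LorAux

variable {n : ℕ}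

/-- normalized coefficient -/
noncomputable def nc (f : MvPolynomial (Fin n) ℝ) (e : Fin n →₀ ℕ) : ℝ :=
  f.coeff e * ∏ i, ((e i).factorial : ℝ)

theorem fact_ne (e : Fin n →₀ ℕ) : (∏ i, ((e i).factorial : ℝ)) ≠ 0 :=
  Finset.prod_ne_zero_iff.2 fun i _ => by exact_mod_cast (e i).factorial_ne_zero

theorem coeff_norm (g : MvPolynomial (Fin n) ℝ) (e : Fin n →₀ ℕ) :
    (normalizePoly g).coeff e = g.coeff e / ∏ i, ((e i).factorial : ℝ) := by
  unfold normalizePoly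
  rw [MvPolynomial.coeff_sum]
  simp only [MvPolynomial.coeff_monomial]
  rw [Finset.sum_ite_eq']
  split_ifs with h
  · rfl
  · rw [MvPolynomial.notMem_support_iff.1 h, zero_div]

theorem nc_norm (g : MvPolynomial (Fin n) ℝ) (e : Fin n →₀ ℕ) :
    nc (normalizePoly g) e = g.coeff e := by
  rw [nc, coeff_norm, div_mul_cancel₀ _ (fact_ne e)]

theorem nc_pderiv (f : MvPolynomial (Fin n) ℝ) (i : Fin n) (e : Fin n →₀ ℕ) :
    nc (MvPolynomial.pderiv i f) e = nc f (e + Finsupp.single i 1) := by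
  unfold nc
  rw [MvPolynomial.coeff_pderiv]
  have h : (∏ t, (((e + Finsupp.single i 1 : Fin n →₀ ℕ) t).factorial : ℝ)) =
      (e i + 1) * ∏ t, ((e t).factorial : ℝ) := by
    rw [← Finset.mul_prod_erase _ _ (Finset.mem_univ i),
      ← Finset.mul_prod_erase Finset.univ (fun t => ((e t).factorial : ℝ)) (Finset.mem_univ i)]
    rw [← mul_assoc]
    congr 1
    · simp [Nat.factorial_succ]
    · refine Finset.prod_congr rfl fun t ht => ?_
      simp [(Finset.ne_of_mem_erase ht).symm]
  rw [h]; ring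

theorem nc_foldl (L : List (Fin n)) : ∀ f : MvPolynomial (Fin n) ℝ, ∃ α : Fin n →₀ ℕ, ∀ e,
    nc (L.foldl (fun g i => MvPolynomial.pderiv i g) f) e = nc f (e + α) := by
  induction L with
  | nil => exact fun f => ⟨0, fun e => by simp⟩
  | cons i L ih =>
    intro f
    obtain ⟨α, h⟩ := ih (MvPolynomial.pderiv i f)
    refine ⟨α + Finsupp.single i 1, fun e => ?_⟩
    rw [List.foldl_cons, h, nc_pderiv, add_assoc]

theorem hess_nc (f : MvPolynomial (Fin n) ℝ) (i j : Fin n) :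
    hessian f i j = nc f (Finsupp.single i 1 + Finsupp.single j 1) := by
  have : hessian f i j = nc (MvPolynomial.pderiv i (MvPolynomial.pderiv j f)) 0 := by
    simp [hessian, nc]
  rw [this, nc_pderiv, nc_pderiv, zero_add]

theorem main_aux {m : ℕ} (B : Set (Fin m ⊕ Fin m → ℕ)) {r : ℕ} (g : MvPolynomial (Fin (m + 1)) ℝ)
    (hg : ∀ κ, g.coeff (Finsupp.equivFunOnFinite.symm κ) = (cnt B κ : ℝ))
    (hB : ∀ κ, ∑ i, κ i ≠ r → cnt B κ = 0)
    (hpoly : ∃ rkQ : Finset (Fin (m + 1)) → ℕ, IsPolymatroid rkQ ∧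
      ∀ κ : Fin (m + 1) → ℕ, 0 < cnt B κ ↔ (fun i => (κ i : ℝ)) ∈ basePolytope rkQ)
    (hh : ∀ α, Hyp (fun i j => (cnt B (α + ev i + ev j) : ℝ))) :
    IsDenormalizedLorentzian r g := by
  have hg' : ∀ e : Fin (m + 1) →₀ ℕ, g.coeff e = (cnt B e : ℝ) := by
    intro e
    rw [← hg]
    congr 1
    ext i; simp
  have hpos : ∀ e : Fin (m + 1) →₀ ℕ, (0 : ℝ) < ∏ i, ((e i).factorial : ℝ) := fun e =>
    Finset.prod_pos fun i _ => by exact_mod_cast (e i).factorial_pos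
  refine ⟨?_, ?_, ?_, ?_⟩
  · intro e he
    rw [coeff_norm, hg'] at he
    by_contra hc
    rw [hB] at he
    · simp at he
    · intro h
      apply hc
      rw [Finsupp.weight_apply, Finsupp.sum_fintype _ _ (by simp)]
      simpa using h
  · intro e
    rw [coeff_norm, hg']
    exact div_nonneg (Nat.cast_nonneg _) (hpos e).le
  · obtain ⟨q, h1, h2⟩ := hpoly
    refine ⟨q, h1, fun κ => ?_⟩
    rw [← h2, coeff_norm, hg, div_pos_iff_of_pos_right (hpos _)]
    exact Nat.cast_pos
  · intro v hA
    refine AtMost_of_Hyp _ ?_ hA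
    obtain ⟨α, h⟩ := nc_foldl (List.ofFn v) (normalizePoly g)
    have e1 : hessian ((List.ofFn v).foldl (fun g i => MvPolynomial.pderiv i g) (normalizePoly g)) =
        fun i j => (cnt B ((α : Fin (m + 1) → ℕ) + ev i + ev j) : ℝ) := by
      funext i j
      rw [hess_nc, h, nc_norm, hg']
      congr 2
      funext t
      simp only [Finsupp.add_apply, Pi.add_apply, ev, Finsupp.single_eq_pi_single]
      omega
    rw [e1]
    exact hh _

end LorAux

/-- For a polymatroid `P` of rank `r` on `[m]` with `rk_P({i}) = r` for some `i`, the
homogenization `H̃(t, t₀) = Σ_κ a_κ t^κ t₀^{r-|κ|}` of the transformed Snapper polynomial,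
where `Σ_{κ ∈ I(P)∩ℤ^m} t^{(κ)} = Σ_κ (-1)^{r-|κ|} a_κ t^{[κ]}`, is denormalized Lorentzian;
in particular the `a_κ` are nonnegative. -/
theorem lorentzian_of_transformed_snapper_of_polymatroid
    {m r : ℕ} (rk : Finset (Fin m) → ℕ) (hP : IsPolymatroid rk)
    (hrank : rk Finset.univ = r) (hfull : ∃ i : Fin m, rk {i} = r)
    (a : (Fin m → ℕ) → ℤ)
    (ha : (∑ᶠ (κ : Fin m → ℕ) (_ : (fun i => (κ i : ℝ)) ∈ indepPolytope rk),
            ∏ i, binomLower (MvPolynomial.X i) (κ i)) =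
          ∑ᶠ (κ : Fin m → ℕ) (_ : ∑ i, κ i ≤ r),
            MvPolynomial.C ((-1 : ℚ) ^ (r - ∑ i, κ i) * (a κ : ℚ)) *
              ∏ i, binomUpper (MvPolynomial.X i) (κ i)) :
    IsDenormalizedLorentzian r
      (∑ᶠ (κ : Fin m → ℕ) (_ : ∑ i, κ i ≤ r),
        MvPolynomial.monomial
          (Finsupp.equivFunOnFinite.symm (Fin.cons (r - ∑ i, κ i) κ)) ((a κ : ℝ))) ∧
    ∀ κ : Fin m → ℕ, ∑ i, κ i ≤ r → 0 ≤ a κ := by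
  obtain ⟨e, he⟩ := hfull
  have hak := LorAux.a_eq rk hP hrank e he a ha
  refine ⟨?_, fun κ hκ => by rw [hak κ hκ]; exact Int.natCast_nonneg _⟩
  have hB : ∀ κ : Fin (m + 1) → ℕ, ∑ i, κ i ≠ r → LorAux.cnt (LorAux.Big rk e) κ = 0 :=
    fun κ h => LorAux.cnt_zero κ (by rw [hrank]; exact h)
  refine LorAux.main_aux (LorAux.Big rk e) _ ?_ hB (LorAux.poly_cnt hP e (by rw [he, hrank]))
    (LorAux.hyp_Big hP e)
  intro κ
  rw [LorAux.finsum_to (fun κ => (LorAux.mem_DegF κ).symm), MvPolynomial.coeff_sum]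
  simp only [MvPolynomial.coeff_monomial, EmbeddingLike.apply_eq_iff_eq]
  have hs := Fin.sum_univ_succ κ
  by_cases h : ∑ i, κ i = r
  · have hle : ∑ i : Fin m, κ i.succ ≤ r := by omega
    have h0 : r - ∑ i : Fin m, κ i.succ = κ 0 := by omega
    rw [Finset.sum_eq_single (fun i : Fin m => κ i.succ)]
    · have hcons : (Fin.cons (κ 0) fun i : Fin m => κ i.succ) = κ := Fin.cons_self_tail κ
      rw [h0, if_pos hcons, hak _ hle, h0]
      simp [LorAux.cnt]
    · intro k _ hne
      rw [if_neg]
      intro hc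
      apply hne
      rw [← hc]
      funext i
      simp
    · intro hc
      exact absurd ((LorAux.mem_DegF _).2 hle) hc
  · rw [hB κ h, Nat.cast_zero]
    refine Finset.sum_eq_zero fun k hk => ?_
    rw [LorAux.mem_DegF] at hk
    rw [if_neg]
    intro hc
    apply h
    rw [hs, ← hc]
    simp only [Fin.cons_zero, Fin.cons_succ]
    omega
end

section
/- Let P be a polymatroid of rank r on [m] such that rk_P({i}) = r for some i ∈ [m]. Define integers a_k (for k ∈ ℤ_{≥0}^m with |k| ≤ r) by the expansion Σ_{k ∈ I(P)∩ℤ^m} t^{(k)} = Σ_k (−1)^{r−|k|} a_k t^{[k]} in ℚ[t_1,…,t_m]. Then the support {(k, r−|k|) : a_k ≠ 0} ⊆ ℤ_{≥0}^{m+1} of the homogeneous polynomial H̃(t_1,…,t_m,t_0) = Σ_k a_k t^k t_0^{r−|k|} is the set of lattice points of the base polytope of some polymatroid on the (m+1)-element set {0,1,…,m}. -/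
open MvPolynomial Finset

theorem aux_binomLower_succ {σ : Type*} (p : MvPolynomial σ ℚ) (k : ℕ) :
    binomLower p (k + 1) = binomUpper p (k + 1) - binomUpper p k := by
  unfold binomLower binomUpper
  rw [Finset.prod_range_succ', Finset.prod_range_succ]
  have h : ((k.factorial : ℚ))⁻¹ = ((k+1).factorial : ℚ)⁻¹ * ((k : ℚ) + 1) := by
    rw [Nat.factorial_succ]
    push_cast
    have : (k.factorial : ℚ) ≠ 0 := by exact_mod_cast k.factorial_ne_zero
    field_simp
  rw [h, mul_smul, ← smul_sub]
  congr 1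
  rw [MvPolynomial.smul_eq_C_mul]
  push_cast
  simp only [map_add, map_one, map_zero]
  ring

theorem aux_binomLower_zero {σ : Type*} (p : MvPolynomial σ ℚ) :
    binomLower p 0 = binomUpper p 0 := by
  simp [binomLower, binomUpper]

theorem aux_eval_zero {σ : Type*} (n : σ → ℕ) (i : σ) (k : ℕ) (h : n i < k) :
    MvPolynomial.eval (fun i => -1 - (n i : ℚ)) (binomUpper (MvPolynomial.X i) k) = 0 := by
  unfold binomUpper
  rw [MvPolynomial.smul_eval, MvPolynomial.eval_prod]
  rw [Finset.prod_eq_zero (Finset.mem_range.2 h)]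
  · simp
  · simp only [map_add, MvPolynomial.eval_X, MvPolynomial.eval_C]
    ring

theorem aux_eval_ne {σ : Type*} (n : σ → ℕ) (i : σ) :
    MvPolynomial.eval (fun i => -1 - (n i : ℚ)) (binomUpper (MvPolynomial.X i) (n i)) ≠ 0 := by
  unfold binomUpper
  rw [MvPolynomial.smul_eval, MvPolynomial.eval_prod]
  refine mul_ne_zero (inv_ne_zero (by exact_mod_cast (n i).factorial_ne_zero)) ?_
  rw [Finset.prod_ne_zero_iff]
  intro j hj
  have hj' : (j : ℚ) < n i := by exact_mod_cast Finset.mem_range.1 hj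
  simp only [map_add, MvPolynomial.eval_X, MvPolynomial.eval_C]
  intro h
  linarith

/-- Linear independence of the `t^{[k]}`. -/
theorem aux_indep {m : ℕ} (K : Finset (Fin m → ℕ)) (c : (Fin m → ℕ) → ℚ)
    (h : ∑ κ ∈ K, MvPolynomial.C (c κ) *
      ∏ i, binomUpper (MvPolynomial.X i : MvPolynomial (Fin m) ℚ) (κ i) = 0) :
    ∀ κ ∈ K, c κ = 0 := by
  classical
  by_contra! hne
  obtain ⟨κ₀, h₀, hc₀⟩ := hne
  obtain ⟨n, hn⟩ := (K.filter (fun κ => c κ ≠ 0)).exists_minimal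
    ⟨κ₀, Finset.mem_filter.2 ⟨h₀, hc₀⟩⟩
  have hnK := Finset.mem_filter.1 hn.1
  have h2 := congrArg (MvPolynomial.eval (fun i => -1 - (n i : ℚ))) h
  rw [map_sum, map_zero, Finset.sum_eq_single n] at h2
  · rw [map_mul, MvPolynomial.eval_C, MvPolynomial.eval_prod] at h2
    exact mul_ne_zero hnK.2 (Finset.prod_ne_zero_iff.2 fun i _ => aux_eval_ne n i) h2
  · intro κ hκ hκn
    rw [map_mul, MvPolynomial.eval_C, MvPolynomial.eval_prod]
    by_cases hc : c κ = 0
    · simp [hc]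
    · have : ∃ i, n i < κ i := by
        by_contra! hle
        exact hκn (le_antisymm hle (hn.2 (Finset.mem_filter.2 ⟨hκ, hc⟩) hle))
      obtain ⟨i, hi⟩ := this
      rw [Finset.prod_eq_zero (Finset.mem_univ i) (aux_eval_zero n i _ hi), mul_zero]
  · intro h3
    exact absurd hnK.1 h3

/-- indicator vector -/
def auxE {m : ℕ} (S : Finset (Fin m)) : Fin m → ℕ := fun i => if i ∈ S then 1 else 0

open Classical in
theorem aux_prod_lower {m : ℕ} (κ : Fin m → ℕ) :
    ∏ i, binomLower (MvPolynomial.X i : MvPolynomial (Fin m) ℚ) (κ i) =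
      ∑ S : Finset (Fin m), if auxE S ≤ κ then
        (-1) ^ S.card * ∏ i, binomUpper (MvPolynomial.X i : MvPolynomial (Fin m) ℚ)
          ((κ - auxE S) i) else 0 := by
  classical
  have h : ∀ i, binomLower (MvPolynomial.X i : MvPolynomial (Fin m) ℚ) (κ i) =
      (if 1 ≤ κ i then - binomUpper (MvPolynomial.X i) (κ i - 1) else 0) +
        binomUpper (MvPolynomial.X i) (κ i) := by
    intro i
    rcases hk : κ i with _ | k
    · simp [aux_binomLower_zero]
    · simp [aux_binomLower_succ]; ring
  rw [Finset.prod_congr rfl (fun i _ => h i), Finset.prod_add, Finset.powerset_univ]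
  refine Finset.sum_congr rfl fun S _ => ?_
  split_ifs with hS
  · have h1 : ∀ i ∈ S, (if 1 ≤ κ i then
        - binomUpper (MvPolynomial.X i : MvPolynomial (Fin m) ℚ) (κ i - 1) else 0)
        = (-1) * binomUpper (MvPolynomial.X i : MvPolynomial (Fin m) ℚ) ((κ - auxE S) i) := by
      intro i hi
      have := hS i
      simp only [auxE, hi, if_true] at this
      simp [this, auxE, hi]
    have h2 : ∀ i ∈ Finset.univ \ S, binomUpper (MvPolynomial.X i : MvPolynomial (Fin m) ℚ) (κ i)
        = binomUpper (MvPolynomial.X i : MvPolynomial (Fin m) ℚ) ((κ - auxE S) i) := by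
      intro i hi
      have hi : i ∉ S := by simpa using hi
      simp [auxE, hi]
    rw [Finset.prod_congr rfl h1, Finset.prod_congr rfl h2, Finset.prod_mul_distrib,
      Finset.prod_const, mul_assoc, mul_comm (∏ i ∈ S, _),
      Finset.prod_sdiff (Finset.subset_univ S)]
  · have : ∃ i, ¬ (auxE S i ≤ κ i) := by
      by_contra! hle
      exact hS hle
    obtain ⟨i, hi⟩ := this
    have hiS : i ∈ S := by
      by_contra hc
      simp [auxE, hc] at hi
    rw [Finset.prod_eq_zero hiS, zero_mul]
    simp only [auxE, hiS, if_true] at hi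
    simp [hi]

/-- The polynomial identity, with coefficients collected. -/
theorem aux_collect {m : ℕ} (K I : Finset (Fin m → ℕ))
    (hIK : ∀ κ S, κ + auxE S ∈ I → κ ∈ K) :
    ∑ κ ∈ I, ∏ i, binomLower (MvPolynomial.X i : MvPolynomial (Fin m) ℚ) (κ i) =
      ∑ κ ∈ K, MvPolynomial.C (∑ S : Finset (Fin m), if κ + auxE S ∈ I then (-1 : ℚ) ^ S.card
        else 0) * ∏ i, binomUpper (MvPolynomial.X i : MvPolynomial (Fin m) ℚ) (κ i) := by
  classical
  simp only [aux_prod_lower, map_sum, Finset.sum_mul]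
  rw [Finset.sum_comm, Finset.sum_comm (s := K)]
  refine Finset.sum_congr rfl fun S _ => ?_
  have hR : ∀ κ : Fin m → ℕ, MvPolynomial.C (if κ + auxE S ∈ I then (-1 : ℚ) ^ S.card else 0) *
      ∏ i, binomUpper (MvPolynomial.X i : MvPolynomial (Fin m) ℚ) (κ i) =
      if κ + auxE S ∈ I then (-1) ^ S.card *
        ∏ i, binomUpper (MvPolynomial.X i : MvPolynomial (Fin m) ℚ) (κ i) else 0 := by
    intro κ
    split_ifs <;> simp
  simp only [hR]
  rw [← Finset.sum_filter, ← Finset.sum_filter]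
  refine Finset.sum_bij' (fun κ _ => κ - auxE S) (fun κ _ => κ + auxE S) ?_ ?_ ?_ ?_ ?_
  · intro κ hκ
    have hκ := Finset.mem_filter.1 hκ
    have he : κ - auxE S + auxE S = κ := tsub_add_cancel_of_le hκ.2
    refine Finset.mem_filter.2 ⟨hIK _ S ?_, ?_⟩ <;> rw [he] <;> exact hκ.1
  · intro κ hκ
    have hκ := Finset.mem_filter.1 hκ
    exact Finset.mem_filter.2 ⟨hκ.2, le_add_self⟩
  · intro κ hκ
    exact tsub_add_cancel_of_le (Finset.mem_filter.1 hκ).2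
  · intro κ hκ
    exact add_tsub_cancel_right _ _
  · intro κ hκ
    rfl

/-- Independence of `κ + e_S`. -/
def auxInd {m : ℕ} (rk : Finset (Fin m) → ℕ) (κ : Fin m → ℕ) (S : Finset (Fin m)) : Prop :=
  ∀ J : Finset (Fin m), ∑ i ∈ J, κ i + (J ∩ S).card ≤ rk J

theorem aux_mem_indep {m : ℕ} (rk : Finset (Fin m) → ℕ) (κ : Fin m → ℕ) :
    (fun i => (κ i : ℝ)) ∈ indepPolytope rk ↔ ∀ J : Finset (Fin m), ∑ i ∈ J, κ i ≤ rk J := by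
  constructor
  · intro h J
    have := h.2 J
    beta_reduce at this
    exact_mod_cast this
  · intro h
    exact ⟨fun i => by positivity, fun J => by beta_reduce; exact_mod_cast h J⟩

theorem aux_ind_iff {m : ℕ} (rk : Finset (Fin m) → ℕ) (κ : Fin m → ℕ) (S : Finset (Fin m)) :
    (∀ J : Finset (Fin m), ∑ i ∈ J, (κ + auxE S) i ≤ rk J) ↔ auxInd rk κ S := by
  unfold auxInd auxE
  refine forall_congr' fun J => ?_
  simp [Finset.sum_add_distrib]

theorem aux_ind_mono {m : ℕ} {rk : Finset (Fin m) → ℕ} {κ : Fin m → ℕ} {S T : Finset (Fin m)}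
    (h : auxInd rk κ T) (hST : S ⊆ T) : auxInd rk κ S := by
  intro J
  have := Finset.card_le_card (Finset.inter_subset_inter_left (s := J) hST)
  have := h J
  omega

theorem aux_ind_insert {m r : ℕ} {rk : Finset (Fin m) → ℕ} (hP : IsPolymatroid rk)
    (hrank : rk Finset.univ = r) {d : Fin m} (hd : rk {d} = r) (κ : Fin m → ℕ)
    {S : Finset (Fin m)} (hS : d ∉ S) :
    auxInd rk κ (insert d S) ↔ auxInd rk κ S ∧ ∑ i, κ i + S.card + 1 ≤ r := by
  constructor
  · intro h
    refine ⟨aux_ind_mono h (Finset.subset_insert _ _), ?_⟩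
    have := h Finset.univ
    rw [Finset.univ_inter, Finset.card_insert_of_notMem hS, hrank] at this
    omega
  · rintro ⟨h, hc⟩ J
    by_cases hJ : d ∈ J
    · have h1 := hP.2.1 {d} J (by simpa using hJ)
      have h2 : (J ∩ insert d S).card ≤ S.card + 1 :=
        (Finset.card_le_card Finset.inter_subset_right).trans (Finset.card_insert_le _ _)
      have h3 : ∑ i ∈ J, κ i ≤ ∑ i, κ i :=
        Finset.sum_le_sum_of_subset (Finset.subset_univ J)
      omega
    · rw [Finset.inter_insert_of_notMem hJ]
      exact h J

open Classical in
theorem aux_euler {m r : ℕ} {rk : Finset (Fin m) → ℕ} (hP : IsPolymatroid rk)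
    (hrank : rk Finset.univ = r) {d : Fin m} (hd : rk {d} = r) (κ : Fin m → ℕ)
    (hκ : ∑ i, κ i ≤ r) :
    (∑ S : Finset (Fin m), if auxInd rk κ S then (-1 : ℚ) ^ S.card else 0) =
      (-1) ^ (r - ∑ i, κ i) *
        (((Finset.univ.erase d).powerset.filter
          (fun S => auxInd rk κ S ∧ S.card = r - ∑ i, κ i)).card : ℚ) := by
  rw [← Finset.powerset_univ, ← Finset.insert_erase (Finset.mem_univ d),
    Finset.sum_powerset_insert (Finset.notMem_erase _ _), ← Finset.sum_add_distrib,
    Finset.insert_erase (Finset.mem_univ d),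
    Finset.card_filter]
  push_cast
  rw [Finset.mul_sum]
  refine Finset.sum_congr rfl fun S hS => ?_
  have hdS : d ∉ S := fun h => Finset.notMem_erase d _ (Finset.mem_powerset.1 hS h)
  rw [aux_ind_insert hP hrank hd κ hdS, Finset.card_insert_of_notMem hdS]
  by_cases hI : auxInd rk κ S
  · have h1 := hI Finset.univ
    rw [Finset.univ_inter, hrank] at h1
    by_cases hc : S.card = r - ∑ i, κ i
    · have : ¬ (∑ i, κ i + S.card + 1 ≤ r) := by omega
      rw [if_pos hI, if_neg (fun h => this h.2), if_pos ⟨hI, hc⟩, hc]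
      ring
    · have : ∑ i, κ i + S.card + 1 ≤ r := by omega
      simp [hI, this, hc, pow_succ]
  · simp [hI]

/-- Rank formula. -/
theorem aux_max {m : ℕ} {rk : Finset (Fin m) → ℕ} (hP : IsPolymatroid rk) (κ : Fin m → ℕ)
    (hκ : auxInd rk κ ∅) (E : Finset (Fin m)) :
    ∃ S ⊆ E, auxInd rk κ S ∧ ∃ T, ∑ i ∈ T, κ i + S.card = rk T + (E \ T).card := by
  classical
  obtain ⟨S, hS, hmax⟩ := (E.powerset.filter (fun S => auxInd rk κ S)).exists_max_image
    Finset.card ⟨∅, by simp [hκ]⟩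
  have hS' := Finset.mem_filter.1 hS
  have hSE := Finset.mem_powerset.1 hS'.1
  have hInd := hS'.2
  refine ⟨S, hSE, hInd, ?_⟩
  have key : ∀ F : Finset (Fin m), F ⊆ E \ S →
      ∃ T, F ⊆ T ∧ ∑ i ∈ T, κ i + (T ∩ S).card = rk T := by
    intro F
    induction F using Finset.induction_on with
    | empty => intro _; exact ⟨∅, by simp, by simp [hP.1]⟩
    | insert e F he ih =>
      intro hF
      obtain ⟨T, hFT, hT⟩ := ih ((Finset.subset_insert _ _).trans hF)
      have heES := Finset.mem_sdiff.1 (hF (Finset.mem_insert_self e F))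
      have hn : ¬ auxInd rk κ (insert e S) := by
        intro h
        have := hmax (insert e S) (Finset.mem_filter.2 ⟨Finset.mem_powerset.2
          (Finset.insert_subset heES.1 hSE), h⟩)
        rw [Finset.card_insert_of_notMem heES.2] at this
        omega
      unfold auxInd at hn
      push Not at hn
      obtain ⟨J, hJ⟩ := hn
      have hJS := hInd J
      have heJ : e ∈ J := by
        by_contra hc
        rw [Finset.inter_insert_of_notMem hc] at hJ
        omega
      have hJt : ∑ i ∈ J, κ i + (J ∩ S).card = rk J := by
        rw [Finset.inter_insert_of_mem heJ] at hJ
        have := Finset.card_insert_le e (J ∩ S)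
        omega
      refine ⟨T ∪ J, ?_, ?_⟩
      · intro x hx
        rcases Finset.mem_insert.1 hx with rfl | hx
        · exact Finset.mem_union_right _ heJ
        · exact Finset.mem_union_left _ (hFT hx)
      · have h1 := hP.2.2 T J
        have h2 := hInd (T ∪ J)
        have h3 := hInd (T ∩ J)
        have h4 := Finset.sum_union_inter (s₁ := T) (s₂ := J) (f := κ)
        have h5 := Finset.card_union_add_card_inter (T ∩ S) (J ∩ S)
        rw [← Finset.union_inter_distrib_right, ← Finset.inter_inter_distrib_right] at h5
        omega
  obtain ⟨T, hT1, hT2⟩ := key _ subset_rfl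
  refine ⟨T, ?_⟩
  have h1 : E \ T = S \ T := by
    ext x
    simp only [Finset.mem_sdiff]
    constructor
    · rintro ⟨hx, hxT⟩
      refine ⟨?_, hxT⟩
      by_contra hc
      exact hxT (hT1 (Finset.mem_sdiff.2 ⟨hx, hc⟩))
    · rintro ⟨hx, hxT⟩
      exact ⟨hSE hx, hxT⟩
  have h2 := Finset.card_sdiff_add_card_inter S T
  rw [Finset.inter_comm] at h2
  rw [h1]
  omega

theorem aux_min {α : Type*} [Fintype α] [DecidableEq α] (g : Finset α → ℕ) :
    ∃ ρ : Finset α → ℕ, (∀ A B, A ⊆ B → ρ A ≤ g B) ∧ ∀ A, ∃ B, A ⊆ B ∧ ρ A = g B := by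
  have : ∀ A : Finset α, ∃ B, A ⊆ B ∧ ∀ C, A ⊆ C → g B ≤ g C := by
    intro A
    obtain ⟨B, hB, h⟩ := (Finset.univ.filter (fun B => A ⊆ B)).exists_min_image g
      ⟨A, by simp⟩
    exact ⟨B, by simpa using hB, fun C hC => h C (by simpa using hC)⟩
  choose f hf using this
  exact ⟨fun A => g (f A), fun A B h => (hf A).2 B h, fun A => ⟨f A, (hf A).1, rfl⟩⟩

theorem aux_polymatroid {α : Type*} [Fintype α] [DecidableEq α] (g : Finset α → ℕ) (r : ℕ)
    (h0 : g ∅ = 0) (hu : r ≤ g Finset.univ)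
    (hg : ∀ I J : Finset α, g (I ∩ J) + g (I ∪ J) ≤ g I + g J) :
    ∃ q : Finset α → ℕ, IsPolymatroid q ∧ ∀ e : α → ℕ,
      (fun i => (e i : ℝ)) ∈ basePolytope q ↔ (∑ i, e i = r ∧ ∀ A, ∑ i ∈ A, e i ≤ g A) := by
  obtain ⟨ρ, h1, h2⟩ := aux_min g
  have hmono : ∀ A B, A ⊆ B → ρ A ≤ ρ B := by
    intro A B hAB
    obtain ⟨C, hC, hC'⟩ := h2 B
    rw [hC']
    exact h1 _ _ (hAB.trans hC)
  have huniv : ρ Finset.univ = g Finset.univ := by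
    obtain ⟨C, hC, hC'⟩ := h2 Finset.univ
    rw [hC', Finset.univ_subset_iff.1 hC]
  refine ⟨fun A => min r (ρ A), ⟨?_, ?_, ?_⟩, ?_⟩
  · have := h1 ∅ ∅ subset_rfl
    simp only
    omega
  · intro A B hAB
    have := hmono A B hAB
    simp only
    omega
  · intro A B
    obtain ⟨C, hC, hC'⟩ := h2 A
    obtain ⟨D, hD, hD'⟩ := h2 B
    have e1 := h1 (A ∩ B) (C ∩ D) (Finset.inter_subset_inter hC hD)
    have e2 := h1 (A ∪ B) (C ∪ D) (Finset.union_subset_union hC hD)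
    have e3 := hg C D
    have e4 := hmono (A ∩ B) A Finset.inter_subset_left
    have e5 := hmono (A ∩ B) B Finset.inter_subset_right
    have e6 := hmono A (A ∪ B) Finset.subset_union_left
    have e7 := hmono B (A ∪ B) Finset.subset_union_right
    simp only
    omega
  · intro e
    have hmin : min r (ρ Finset.univ) = r := by omega
    constructor
    · rintro ⟨_, hs, hA⟩
      beta_reduce at hs hA
      have hs' : ∑ i, e i = min r (ρ Finset.univ) := by exact_mod_cast hs
      refine ⟨by omega, fun A => ?_⟩
      have hA' : ∑ i ∈ A, e i ≤ min r (ρ A) := by exact_mod_cast hA A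
      have := h1 A A subset_rfl
      omega
    · rintro ⟨hs, hA⟩
      refine ⟨fun i => by positivity, ?_, fun A => ?_⟩
      · have : ∑ i, e i = min r (ρ Finset.univ) := by omega
        beta_reduce
        exact_mod_cast this
      · have : ∑ i ∈ A, e i ≤ min r (ρ A) := by
          obtain ⟨C, hC, hC'⟩ := h2 A
          have e1 : ∑ i ∈ A, e i ≤ ∑ i ∈ C, e i := Finset.sum_le_sum_of_subset hC
          have e2 : ∑ i ∈ A, e i ≤ ∑ i, e i := Finset.sum_le_sum_of_subset (Finset.subset_univ A)
          have e3 := hA C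
          omega
        beta_reduce
        exact_mod_cast this

/-- The part of `A` in `{1,…,m}`. -/
def auxTail {m : ℕ} (A : Finset (Fin (m + 1))) : Finset (Fin m) :=
  Finset.univ.filter (fun i => i.succ ∈ A)

def auxG {m : ℕ} (rk : Finset (Fin m) → ℕ) (E : Finset (Fin m)) (A : Finset (Fin (m + 1))) : ℕ :=
  rk (auxTail A) + if 0 ∈ A then (E \ auxTail A).card else 0

theorem aux_G_sub {m : ℕ} {rk : Finset (Fin m) → ℕ} (hP : IsPolymatroid rk) (E : Finset (Fin m))
    (A B : Finset (Fin (m + 1))) :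
    auxG rk E (A ∩ B) + auxG rk E (A ∪ B) ≤ auxG rk E A + auxG rk E B := by
  have hi : auxTail (A ∩ B) = auxTail A ∩ auxTail B := by ext; simp [auxTail]
  have hu : auxTail (A ∪ B) = auxTail A ∪ auxTail B := by ext; simp [auxTail]
  unfold auxG
  rw [hi, hu]
  have h1 := hP.2.2 (auxTail A) (auxTail B)
  have h2 : (E \ (auxTail A ∪ auxTail B)).card ≤ (E \ auxTail A).card :=
    Finset.card_le_card (Finset.sdiff_subset_sdiff subset_rfl Finset.subset_union_left)
  have h3 : (E \ (auxTail A ∪ auxTail B)).card ≤ (E \ auxTail B).card :=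
    Finset.card_le_card (Finset.sdiff_subset_sdiff subset_rfl Finset.subset_union_right)
  have h4 := Finset.card_union_add_card_inter (E \ auxTail A) (E \ auxTail B)
  have h5 : E \ auxTail A ∪ E \ auxTail B = E \ (auxTail A ∩ auxTail B) := by
    ext x
    simp only [Finset.mem_union, Finset.mem_sdiff, Finset.mem_inter]
    tauto
  have h6 : E \ auxTail A ∩ (E \ auxTail B) = E \ (auxTail A ∪ auxTail B) := by
    ext x
    simp only [Finset.mem_union, Finset.mem_sdiff, Finset.mem_inter]
    tauto
  rw [h5, h6] at h4
  by_cases hA : (0 : Fin (m + 1)) ∈ A <;> by_cases hB : (0 : Fin (m + 1)) ∈ B <;>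
    simp [hA, hB] <;> omega

theorem aux_sum_tail {m : ℕ} (e : Fin (m + 1) → ℕ) (A : Finset (Fin (m + 1))) :
    ∑ i ∈ A, e i = (if 0 ∈ A then e 0 else 0) + ∑ i ∈ auxTail A, e i.succ := by
  have : ∑ i ∈ A, e i = ∑ i, if i ∈ A then e i else 0 := by simp
  rw [this, Fin.sum_univ_succ, auxTail, Finset.sum_filter]

theorem aux_cond {m : ℕ} (rk : Finset (Fin m) → ℕ) (E : Finset (Fin m)) (e : Fin (m + 1) → ℕ) :
    (∀ A, ∑ i ∈ A, e i ≤ auxG rk E A) ↔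
      ((∀ J, ∑ i ∈ J, e i.succ ≤ rk J) ∧
        ∀ J, e 0 + ∑ i ∈ J, e i.succ ≤ rk J + (E \ J).card) := by
  constructor
  · intro h
    constructor
    · intro J
      have ht : auxTail (J.map (Fin.succEmb m)) = J := by ext; simp [auxTail]
      have h0 : (0 : Fin (m + 1)) ∉ J.map (Fin.succEmb m) := by simp
      have := h (J.map (Fin.succEmb m))
      rw [aux_sum_tail, auxG, ht, if_neg h0, if_neg h0] at this
      omega
    · intro J
      have ht : auxTail (insert 0 (J.map (Fin.succEmb m))) = J := by ext; simp [auxTail]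
      have h0 : (0 : Fin (m + 1)) ∈ insert 0 (J.map (Fin.succEmb m)) := by simp
      have := h (insert 0 (J.map (Fin.succEmb m)))
      rw [aux_sum_tail, auxG, ht, if_pos h0, if_pos h0] at this
      omega
  · rintro ⟨h1, h2⟩ A
    have h1 := h1 (auxTail A)
    have h2 := h2 (auxTail A)
    rw [aux_sum_tail, auxG]
    split_ifs <;> omega

theorem aux_combin {m r : ℕ} {rk : Finset (Fin m) → ℕ} (hP : IsPolymatroid rk)
    (hrank : rk Finset.univ = r) (E : Finset (Fin m)) (κ : Fin m → ℕ) (c : ℕ)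
    (hc : c + ∑ i, κ i = r) :
    ((∀ J, ∑ i ∈ J, κ i ≤ rk J) ∧ ∀ J, c + ∑ i ∈ J, κ i ≤ rk J + (E \ J).card) ↔
      ∃ S ⊆ E, auxInd rk κ S ∧ S.card = c := by
  constructor
  · rintro ⟨h1, h2⟩
    obtain ⟨S, hSE, hS, T, hT⟩ := aux_max hP κ (fun J => by simpa using h1 J) E
    refine ⟨S, hSE, hS, ?_⟩
    have h3 := h2 T
    have h4 := hS Finset.univ
    rw [Finset.univ_inter, hrank] at h4
    omega
  · rintro ⟨S, hSE, hS, hcard⟩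
    refine ⟨fun J => (Nat.le_add_right _ _).trans (hS J), fun J => ?_⟩
    have h1 := hS J
    have h2 := Finset.card_sdiff_add_card_inter S J
    rw [Finset.inter_comm] at h2
    have h3 : (S \ J).card ≤ (E \ J).card :=
      Finset.card_le_card (Finset.sdiff_subset_sdiff hSE subset_rfl)
    omega

/-- For a polymatroid `P` of rank `r` on `[m]` with `rk_P({i}) = r` for some `i`, the support
`{(κ, r - |κ|) : a_κ ≠ 0}` of the homogenization `H̃ = Σ_κ a_κ t^κ t₀^{r-|κ|}` (where the `a_κ`
are defined by `Σ_{κ ∈ I(P)∩ℤ^m} t^{(κ)} = Σ_κ (-1)^{r-|κ|} a_κ t^{[κ]}`, and `t₀` is placed in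
coordinate `0` of `{0,1,…,m}`) is the set of lattice points of the base polytope of a
polymatroid on the `(m+1)`-element set `{0,1,…,m}`. -/
theorem support_of_transformed_snapper_is_M_convex
    {m r : ℕ} (rk : Finset (Fin m) → ℕ) (hP : IsPolymatroid rk)
    (hrank : rk Finset.univ = r) (hfull : ∃ i : Fin m, rk {i} = r)
    (a : (Fin m → ℕ) → ℤ)
    (ha : (∑ᶠ (κ : Fin m → ℕ) (_ : (fun i => (κ i : ℝ)) ∈ indepPolytope rk),
            ∏ i, binomLower (MvPolynomial.X i) (κ i)) =
          ∑ᶠ (κ : Fin m → ℕ) (_ : ∑ i, κ i ≤ r),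
            MvPolynomial.C ((-1 : ℚ) ^ (r - ∑ i, κ i) * (a κ : ℚ)) *
              ∏ i, binomUpper (MvPolynomial.X i) (κ i)) :
    ∃ rkQ : Finset (Fin (m + 1)) → ℕ, IsPolymatroid rkQ ∧
      ∀ e : Fin (m + 1) → ℕ,
        ((∃ κ : Fin m → ℕ, (∑ i, κ i ≤ r) ∧ a κ ≠ 0 ∧ e = Fin.cons (r - ∑ i, κ i) κ) ↔
          (fun i => (e i : ℝ)) ∈ basePolytope rkQ) := by
  classical
  obtain ⟨d, hd⟩ := hfull
  -- the coefficients
  have hcoef : ∀ κ : Fin m → ℕ, ∑ i, κ i ≤ r →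
      (a κ ≠ 0 ↔ ∃ S ⊆ Finset.univ.erase d, auxInd rk κ S ∧ S.card = r - ∑ i, κ i) := by
    set K : Finset (Fin m → ℕ) :=
      (Fintype.piFinset (fun _ => Finset.range (r + 1))).filter (fun κ => ∑ i, κ i ≤ r) with hK
    have hKmem : ∀ κ : Fin m → ℕ, κ ∈ K ↔ ∑ i, κ i ≤ r := by
      intro κ
      rw [hK, Finset.mem_filter, Fintype.mem_piFinset]
      refine ⟨fun h => h.2, fun h => ⟨fun i => ?_, h⟩⟩
      have := Finset.single_le_sum (f := κ) (fun _ _ => Nat.zero_le _) (Finset.mem_univ i)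
      exact Finset.mem_range.2 (by omega)
    set I : Finset (Fin m → ℕ) :=
      K.filter (fun κ => ∀ J : Finset (Fin m), ∑ i ∈ J, κ i ≤ rk J) with hI
    have hImem : ∀ κ : Fin m → ℕ, κ ∈ I ↔ ∀ J : Finset (Fin m), ∑ i ∈ J, κ i ≤ rk J := by
      intro κ
      rw [hI, Finset.mem_filter, hKmem]
      exact ⟨fun h => h.2, fun h => ⟨hrank ▸ h Finset.univ, h⟩⟩
    rw [finsum_cond_eq_sum_of_cond_iff (t := I) _
        (fun {κ} _ => (aux_mem_indep rk κ).trans (hImem κ).symm),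
      finsum_cond_eq_sum_of_cond_iff (t := K) _ (fun {κ} _ => (hKmem κ).symm),
      aux_collect K I, ← sub_eq_zero, ← Finset.sum_sub_distrib] at ha
    · simp only [← sub_mul, ← map_sub] at ha
      intro κ hκ
      have h1 := aux_indep K _ ha κ ((hKmem κ).2 hκ)
      simp only [hImem, aux_ind_iff] at h1
      rw [aux_euler hP hrank hd κ hκ, ← mul_sub] at h1
      have h2 := (mul_eq_zero.1 h1).resolve_left (pow_ne_zero _ (by norm_num))
      have h3 : (a κ) = (((Finset.univ.erase d).powerset.filter
          (fun S => auxInd rk κ S ∧ S.card = r - ∑ i, κ i)).card : ℤ) := by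
        have := (sub_eq_zero.1 h2).symm
        exact_mod_cast this
      rw [h3]
      simp only [ne_eq, Nat.cast_eq_zero, Finset.card_eq_zero, ← Finset.nonempty_iff_ne_empty]
      constructor
      · rintro ⟨S, hS⟩
        have := Finset.mem_filter.1 hS
        exact ⟨S, Finset.mem_powerset.1 this.1, this.2⟩
      · rintro ⟨S, hS, h⟩
        exact ⟨S, Finset.mem_filter.2 ⟨Finset.mem_powerset.2 hS, h⟩⟩
    · intro κ S h
      rw [hImem, aux_ind_iff] at h
      rw [hKmem]
      have := h Finset.univ
      omega
  obtain ⟨q, hq, hqe⟩ := aux_polymatroid (auxG rk (Finset.univ.erase d)) r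
    (by simp [auxG, auxTail, hP.1])
    (by
      have : auxTail (Finset.univ : Finset (Fin (m + 1))) = Finset.univ := by
        ext; simp [auxTail]
      rw [auxG, this]
      omega)
    (aux_G_sub hP _)
  refine ⟨q, hq, fun e => ?_⟩
  rw [hqe, aux_cond]
  constructor
  · rintro ⟨κ, hκ, hne, rfl⟩
    simp only [Fin.sum_univ_succ, Fin.cons_zero, Fin.cons_succ]
    refine ⟨by omega, ?_⟩
    exact (aux_combin hP hrank _ κ _ (by omega)).2 ((hcoef κ hκ).1 hne)
  · rintro ⟨hs, h⟩
    rw [Fin.sum_univ_succ] at hs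
    have h2 := (aux_combin hP hrank _ (fun i => e i.succ) _ hs).1 h
    have hc : r - ∑ i : Fin m, e i.succ = e 0 := by omega
    have hle : ∑ i : Fin m, e i.succ ≤ r := by omega
    refine ⟨fun i => e i.succ, hle, (hcoef _ hle).2 ?_, ?_⟩
    · simpa only [hc] using h2
    · rw [hc]
      exact (Fin.cons_self_tail e).symm
end
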